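/- arXiv:1605.04877 — 5 statements merged into one kernel-verified Lean document; each statement's English description precedes it below -/
import Mathlib

section
/- Let G be a locally finite undirected graph on a vertex set V and let b ≥ 2 be an integer. For each x ∈ V let R(x) be a set of functions from the neighbourhood N(x) of x to {0,…,b−1}, and set p(x) := 1 − |R(x)|/b^{|N(x)|}. Suppose that Δ := sup_{x∈V} |{y ∈ V : N(x) ∩ N(y) ≠ ∅}| is finite (here y = x is allowed, so this counts the degree of x in the graph Rel(G) that joins x and y whenever their neighbourhoods intersect). If p(x) < 1/(e·Δ) for every x ∈ V, where e is Euler's number, then there exists a function f : V → {0,…,b−1} such that for every x ∈ V the restriction of f to N(x) belongs to R(x). -/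
open Set

/-!
Colour the vertices independently and uniformly. The rule at `x` is then violated with probability
`p x`, independently of the rules at all `y` with `N x ∩ N y = ∅`. If the probability of each bad
event `A i`, given that any finitely many events outside its dependency neighbourhood `D i` fail, is
at most `x i * ∏ j ∈ D i, (1 - x j)`, then by induction on `T` the probability of `A i`, given that
the events in `T` fail, is at most `x i`; by the chain rule, finitely many bad events are thus
avoided with probability at least `∏ (1 - x i) > 0`. Compactness of the space of all colourings
passes from finitely many rules to all of them.
-/

open MeasureTheory ProbabilityTheory

section Events

variable {ι Ω : Type*} {A : ι → Set Ω}

/-- The event that no bad event `A i` with `i ∈ T` occurs. -/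
def avoiding (A : ι → Set Ω) (T : Finset ι) : Set Ω := ⋂ i ∈ T, (A i)ᶜ

lemma avoiding_empty : avoiding A ∅ = univ := by simp [avoiding]

lemma avoiding_anti {S T : Finset ι} (h : S ⊆ T) : avoiding A T ⊆ avoiding A S :=
  biInter_subset_biInter_left h

lemma avoiding_insert [DecidableEq ι] (i : ι) (T : Finset ι) :
    avoiding A (insert i T) = avoiding A T \ A i := by
  rw [avoiding, Finset.set_biInter_insert, inter_comm, sdiff_eq, avoiding]

variable [MeasurableSpace Ω] {μ : Measure Ω} [IsFiniteMeasure μ] {x : ι → ℝ}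

lemma one_sub_mul_measureReal_avoiding_le [DecidableEq ι] {i : ι} (hA : MeasurableSet (A i)) {q : ℝ}
    {T : Finset ι} (h : μ.real (A i ∩ avoiding A T) ≤ q * μ.real (avoiding A T)) :
    (1 - q) * μ.real (avoiding A T) ≤ μ.real (avoiding A (insert i T)) := by
  have hsplit := measureReal_sdiff_add_inter (μ := μ) (s := avoiding A T) hA
  rw [← avoiding_insert, inter_comm] at hsplit
  linarith

lemma prod_one_sub_mul_measureReal_avoiding_le [DecidableEq ι] (hA : ∀ i, MeasurableSet (A i))
    (hx : ∀ i, x i ≤ 1) {W T : Finset ι} (hWT : Disjoint W T)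
    (h : ∀ i ∈ W, ∀ U ⊆ W ∪ T, i ∉ U →
      μ.real (A i ∩ avoiding A U) ≤ x i * μ.real (avoiding A U)) :
    (∏ i ∈ W, (1 - x i)) * μ.real (avoiding A T) ≤ μ.real (avoiding A (W ∪ T)) := by
  induction W using Finset.induction_on with
  | empty => simp
  | insert i W hiW ih =>
    obtain ⟨hiT, hWT⟩ := Finset.disjoint_insert_left.1 hWT
    have hsub : W ∪ T ⊆ insert i W ∪ T :=
      Finset.union_subset_union_left (Finset.subset_insert i W)
    have ih := ih hWT fun j hj U hU ↦ h j (Finset.mem_insert_of_mem hj) U (hU.trans hsub)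
    have hi := h i (Finset.mem_insert_self i W) (W ∪ T) hsub (by simp [hiW, hiT])
    calc (∏ j ∈ insert i W, (1 - x j)) * μ.real (avoiding A T)
        = (1 - x i) * ((∏ j ∈ W, (1 - x j)) * μ.real (avoiding A T)) := by
          rw [Finset.prod_insert hiW, mul_assoc]
      _ ≤ (1 - x i) * μ.real (avoiding A (W ∪ T)) :=
          mul_le_mul_of_nonneg_left ih (sub_nonneg.2 (hx i))
      _ ≤ μ.real (avoiding A (insert i W ∪ T)) := by
          rw [Finset.insert_union]
          exact one_sub_mul_measureReal_avoiding_le (hA i) hi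

-- Split `T` into the part inside `D i`, which the induction hypothesis removes one event at a time,
-- and the part outside it, to which `hD` applies.
lemma measureReal_inter_avoiding_le (hA : ∀ i, MeasurableSet (A i))
    (hx₀ : ∀ i, 0 ≤ x i) (hx₁ : ∀ i, x i ≤ 1) {D : ι → Finset ι}
    (hD : ∀ i T, i ∉ T → Disjoint (D i) T →
      μ.real (A i ∩ avoiding A T) ≤ x i * (∏ j ∈ D i, (1 - x j)) * μ.real (avoiding A T))
    (T : Finset ι) {i : ι} (hi : i ∉ T) :
    μ.real (A i ∩ avoiding A T) ≤ x i * μ.real (avoiding A T) := by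
  classical
  induction T using Finset.strongInduction generalizing i with
  | H T ih =>
    have hprod : (∏ j ∈ D i ∩ T, (1 - x j)) * μ.real (avoiding A (T \ D i))
        ≤ μ.real (avoiding A T) := by
      have hunion : D i ∩ T ∪ T \ D i = T := by
        rw [Finset.inter_comm, Finset.union_comm, Finset.sdiff_union_inter]
      conv_rhs => rw [← hunion]
      refine prod_one_sub_mul_measureReal_avoiding_le hA hx₁
        (Finset.disjoint_sdiff.mono_left Finset.inter_subset_left) fun j hj U hU hjU ↦ ?_
      rw [hunion] at hU
      exact ih U (hU.ssubset_of_mem_notMem (Finset.mem_inter.1 hj).2 hjU) hjU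
    have hmono : ∏ j ∈ D i, (1 - x j) ≤ ∏ j ∈ D i ∩ T, (1 - x j) :=
      Finset.prod_le_prod_of_subset_of_le_one Finset.inter_subset_left
        (fun j _ ↦ sub_nonneg.2 (hx₁ j)) fun j _ _ ↦ sub_le_self 1 (hx₀ j)
    calc μ.real (A i ∩ avoiding A T)
        ≤ μ.real (A i ∩ avoiding A (T \ D i)) :=
          measureReal_mono (inter_subset_inter_right _ (avoiding_anti Finset.sdiff_subset))
      _ ≤ x i * (∏ j ∈ D i, (1 - x j)) * μ.real (avoiding A (T \ D i)) :=
          hD i _ (fun h ↦ hi (Finset.sdiff_subset h)) Finset.disjoint_sdiff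
      _ ≤ x i * ((∏ j ∈ D i ∩ T, (1 - x j)) * μ.real (avoiding A (T \ D i))) := by
          rw [mul_assoc]
          gcongr
          exact hx₀ i
      _ ≤ x i * μ.real (avoiding A T) := mul_le_mul_of_nonneg_left hprod (hx₀ i)

theorem prod_one_sub_mul_measureReal_univ_le_avoiding (hA : ∀ i, MeasurableSet (A i))
    (hx₀ : ∀ i, 0 ≤ x i) (hx₁ : ∀ i, x i ≤ 1) {D : ι → Finset ι}
    (hD : ∀ i T, i ∉ T → Disjoint (D i) T →
      μ.real (A i ∩ avoiding A T) ≤ x i * (∏ j ∈ D i, (1 - x j)) * μ.real (avoiding A T))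
    (T : Finset ι) :
    (∏ i ∈ T, (1 - x i)) * μ.real univ ≤ μ.real (avoiding A T) := by
  classical
  simpa [avoiding_empty] using prod_one_sub_mul_measureReal_avoiding_le (μ := μ) hA hx₁
    (Finset.disjoint_empty_right T)
    fun i _ U _ hiU ↦ measureReal_inter_avoiding_le hA hx₀ hx₁ hD U hiU

lemma one_div_exp_one_mul_add_one_le (d : ℕ) :
    1 / (Real.exp 1 * (d + 1)) ≤ 1 / (d + 2) * (1 - 1 / (d + 2 : ℝ)) ^ d := by
  have hexp : (1 + ((d + 1 : ℕ) : ℝ)⁻¹) ^ (d + 1) ≤ Real.exp 1 := Real.one_add_inv_pow_le_exp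
  have hbase : 1 + ((d + 1 : ℕ) : ℝ)⁻¹ = (d + 2) / (d + 1) := by
    push_cast
    field_simp
    ring
  have hone_sub : 1 - 1 / (d + 2 : ℝ) = (d + 1) / (d + 2) := by
    field_simp
    ring
  calc 1 / (Real.exp 1 * (d + 1))
      ≤ 1 / (((d + 2 : ℝ) / (d + 1)) ^ (d + 1) * (d + 1)) := by
        rw [← hbase]
        gcongr
    _ = 1 / (d + 2) * (1 - 1 / (d + 2 : ℝ)) ^ d := by
        rw [hone_sub, div_pow, div_pow, pow_succ, pow_succ]
        field_simp

-- All weights are `1 / (d + 2)`: the usual choice `1 / (d + 1)` equals `1` when `d = 0`, which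
-- would make the lower bound `∏ i ∈ T, (1 - x i)` vanish.
theorem measureReal_avoiding_pos [NeZero μ] (hA : ∀ i, MeasurableSet (A i)) {D : ι → Finset ι}
    {d : ℕ} (hd : ∀ i, (D i).card ≤ d)
    (hD : ∀ i T, i ∉ T → Disjoint (D i) T →
      μ.real (A i ∩ avoiding A T) ≤ 1 / (Real.exp 1 * (d + 1)) * μ.real (avoiding A T))
    (T : Finset ι) : 0 < μ.real (avoiding A T) := by
  have hq : 1 / (d + 2 : ℝ) < 1 := by
    rw [div_lt_one (by positivity)]
    linarith [d.cast_nonneg (α := ℝ)]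
  have hpow (i : ι) : (1 - 1 / (d + 2 : ℝ)) ^ d ≤ ∏ _j ∈ D i, (1 - 1 / (d + 2 : ℝ)) := by
    rw [Finset.prod_const]
    exact pow_le_pow_of_le_one (sub_nonneg.2 hq.le) (sub_le_self 1 (by positivity)) (hd i)
  refine lt_of_lt_of_le ?_ <| prod_one_sub_mul_measureReal_univ_le_avoiding (D := D) hA
    (x := fun _ ↦ 1 / (d + 2 : ℝ)) (fun _ ↦ by positivity) (fun _ ↦ hq.le)
    (fun i T hiT hDT ↦ (hD i T hiT hDT).trans ?_) T
  · exact mul_pos (Finset.prod_pos fun _ _ ↦ sub_pos.2 hq) measureReal_univ_pos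
  · gcongr
    exact (one_div_exp_one_mul_add_one_le d).trans (by gcongr; exact hpow i)

end Events

section ProductSpace

variable {ι V : Type*} {X : V → Type*} [∀ v, MeasurableSpace (X v)] (ν : ∀ v, Measure (X v))
  [∀ v, IsProbabilityMeasure (ν v)]

lemma indepFun_domRestrict_of_disjoint {S T : Set V} (hST : Disjoint S T) :
    IndepFun (S.domRestrict (π := X)) (T.domRestrict (π := X)) (Measure.infinitePi ν) := by
  have hcomap (S : Set V) : MeasurableSpace.comap (S.domRestrict (π := X)) MeasurableSpace.pi
      = ⨆ v ∈ S, MeasurableSpace.comap (fun f : ∀ v, X v ↦ f v) inferInstance := by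
    simp only [MeasurableSpace.pi, MeasurableSpace.comap_iSup, MeasurableSpace.comap_comp,
      iSup_subtype]
    rfl
  have hcoord : iIndepFun (fun v (f : ∀ v, X v) ↦ f v) (Measure.infinitePi ν) :=
    iIndepFun_infinitePi (X := fun _ ↦ id) fun _ ↦ measurable_id
  rw [IndepFun_iff_Indep, hcomap, hcomap]
  exact indep_iSup_of_disjoint (fun v ↦ (measurable_pi_apply v).comap_le) hcoord.iIndep hST

variable {N : ι → Set V} {R : ∀ i, Set (∀ v : N i, X v)}

/-- The configurations that violate the local rule `R i` on the coordinates `N i`. -/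
def violating (R : ∀ i, Set (∀ v : N i, X v)) (i : ι) : Set (∀ v, X v) :=
  (N i).domRestrict ⁻¹' (R i)ᶜ

lemma measurableSet_violating (hR : ∀ i, MeasurableSet (R i)) (i : ι) :
    MeasurableSet (violating R i) :=
  measurable_restrict (N i) (hR i).compl

lemma measureReal_violating_inter_avoiding (hR : ∀ i, MeasurableSet (R i)) {i : ι} {T : Finset ι}
    (hT : ∀ j ∈ T, Disjoint (N i) (N j)) :
    (Measure.infinitePi ν).real (violating R i ∩ avoiding (violating R) T)
      = (Measure.infinitePi ν).real (violating R i)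
        * (Measure.infinitePi ν).real (avoiding (violating R) T) := by
  have havoid : MeasurableSet[MeasurableSpace.comap (N i)ᶜ.domRestrict MeasurableSpace.pi]
      (avoiding (violating R) T) := by
    refine Finset.measurableSet_biInter T fun j hj ↦ MeasurableSet.compl ?_
    have hsub : N j ⊆ (N i)ᶜ := (hT j hj).subset_compl_left
    exact ⟨domRestrict₂ hsub ⁻¹' (R j)ᶜ, measurable_restrict₂ hsub (hR j).compl, rfl⟩
  have hviol : MeasurableSet[MeasurableSpace.comap (N i).domRestrict MeasurableSpace.pi]
      (violating R i) := ⟨(R i)ᶜ, (hR i).compl, rfl⟩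
  have hindep : IndepFun ((N i).domRestrict (π := X)) (N i)ᶜ.domRestrict (Measure.infinitePi ν) :=
    indepFun_domRestrict_of_disjoint ν disjoint_compl_right
  simp only [measureReal_def, hindep.meas_inter hviol havoid, ENNReal.toReal_mul]

lemma avoiding_violating_nonempty (hR : ∀ i, MeasurableSet (R i)) {d : ℕ}
    (hd : ∀ i, {j | j ≠ i ∧ (N i ∩ N j).Nonempty}.encard ≤ d)
    (hp : ∀ i, (Measure.infinitePi ν).real (violating R i) ≤ 1 / (Real.exp 1 * (d + 1)))
    (T : Finset ι) : (avoiding (violating R) T).Nonempty := by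
  have hfin (i : ι) : {j | j ≠ i ∧ (N i ∩ N j).Nonempty}.Finite := finite_of_encard_le_coe (hd i)
  refine nonempty_of_measureReal_ne_zero (μ := Measure.infinitePi ν) <| ne_of_gt <|
    measureReal_avoiding_pos (d := d) (D := fun i ↦ (hfin i).toFinset) (measurableSet_violating hR)
      (fun i ↦ ?_) (fun i T hiT hDT ↦ ?_) T
  · simpa only [(hfin i).encard_eq_coe_toFinset_card, Nat.cast_le] using hd i
  · have hdisj : ∀ j ∈ T, Disjoint (N i) (N j) := fun j hj ↦ by
      by_contra hij
      exact Finset.disjoint_right.1 hDT hj <| (hfin i).mem_toFinset.2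
        ⟨fun h ↦ hiT (h ▸ hj), not_disjoint_iff_nonempty_inter.1 hij⟩
    rw [measureReal_violating_inter_avoiding ν hR hdisj]
    gcongr
    exact hp i

theorem exists_forall_domRestrict_mem [∀ v, TopologicalSpace (X v)] [∀ v, CompactSpace (X v)]
    (hR : ∀ i, MeasurableSet (R i)) (hRc : ∀ i, IsClosed (R i)) {d : ℕ}
    (hd : ∀ i, {j | j ≠ i ∧ (N i ∩ N j).Nonempty}.encard ≤ d)
    (hp : ∀ i, (Measure.infinitePi ν).real (violating R i) ≤ 1 / (Real.exp 1 * (d + 1))) :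
    ∃ f : ∀ v, X v, ∀ i, (N i).domRestrict f ∈ R i := by
  have hclosed (i : ι) : IsClosed ((N i).domRestrict (π := X) ⁻¹' R i) :=
    (hRc i).preimage (continuous_pi fun v ↦ continuous_apply v.1)
  obtain ⟨f, hf⟩ := CompactSpace.iInter_nonempty hclosed fun T ↦ by
    simpa [avoiding, violating] using avoiding_violating_nonempty ν hR hd hp T
  exact ⟨f, mem_iInter.1 hf⟩

end ProductSpace

section FiniteColours

variable {ι V C : Type*} [Finite C]

lemma measureReal_uniformOn_univ {Ω : Type*} [Finite Ω] [MeasurableSpace Ω]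
    [MeasurableSingletonClass Ω] (s : Set Ω) :
    (uniformOn univ : Measure Ω).real s = s.ncard / Nat.card Ω := by
  have := Fintype.ofFinite Ω
  rw [measureReal_def, uniformOn_univ, ENNReal.toReal_div, Measure.count_apply_finite s s.toFinite,
    ← ncard_eq_toFinset_card s, ← Nat.card_eq_fintype_card, ENNReal.toReal_natCast,
    ENNReal.toReal_natCast]

lemma measureReal_infinitePi_uniformOn_domRestrict_preimage [Nonempty C] [MeasurableSpace C]
    [MeasurableSingletonClass C] {S : Set V} (hS : S.Finite) (s : Set (S → C)) :
    (Measure.infinitePi fun _ : V ↦ (uniformOn univ : Measure C)).real (S.domRestrict ⁻¹' s)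
      = s.ncard / (Nat.card C : ℝ) ^ S.ncard := by
  have := hS.fintype
  rw [← map_measureReal_apply (measurable_restrict S) s.toFinite.measurableSet,
    Measure.infinitePi_map_restrict', Measure.infinitePi_eq_pi, ← uniformOn_pi, pi_univ,
    measureReal_uniformOn_univ, Nat.card_fun, Nat.cast_pow, Nat.card_coe_set_eq]

lemma encard_ne_and_inter_nonempty_le {N : ι → Set V} {i : ι} {Δ : ℕ}
    (hΔ : {j | (N i ∩ N j).Nonempty}.encard ≤ Δ) :
    {j | j ≠ i ∧ (N i ∩ N j).Nonempty}.encard ≤ (Δ - 1 : ℕ) := by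
  rcases (N i).eq_empty_or_nonempty with hi | hi
  · simp [hi]
  · have hmem : i ∈ {j | (N i ∩ N j).Nonempty} := by simpa using hi
    have hsdiff : {j | j ≠ i ∧ (N i ∩ N j).Nonempty} = {j | (N i ∩ N j).Nonempty} \ {i} := by
      ext j
      exact and_comm
    rw [hsdiff, encard_sdiff_singleton_of_mem hmem, ENat.natCast_sub, Nat.cast_one]
    exact tsub_le_tsub_right hΔ 1

theorem lovasz_local_lemma_general [Nonempty C] (N : ι → Set V) (hN : ∀ i, (N i).Finite)
    (R : ∀ i, Set (N i → C)) (Δ : ℕ)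
    (hΔ : ∀ i, {j | (N i ∩ N j).Nonempty}.encard ≤ Δ)
    (hp : ∀ i, 1 - ((R i).ncard : ℝ) / (Nat.card C : ℝ) ^ (N i).ncard < 1 / (Real.exp 1 * Δ)) :
    ∃ f : V → C, ∀ i, (fun v : N i ↦ f v) ∈ R i := by
  let _ : TopologicalSpace C := ⊥
  let _ : MeasurableSpace C := ⊤
  have : DiscreteTopology C := ⟨rfl⟩
  have (i : ι) : Finite (N i) := hN i
  refine exists_forall_domRestrict_mem (fun _ ↦ (uniformOn univ : Measure C)) (d := Δ - 1)
    (fun i ↦ (R i).toFinite.measurableSet) (fun i ↦ isClosed_discrete (R i))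
    (fun i ↦ encard_ne_and_inter_nonempty_le (hΔ i)) fun i ↦ ?_
  calc _ = 1 - ((R i).ncard : ℝ) / (Nat.card C : ℝ) ^ (N i).ncard := by
        rw [violating, preimage_compl, probReal_compl_eq_one_sub
          (measurable_restrict (N i) (R i).toFinite.measurableSet),
          measureReal_infinitePi_uniformOn_domRestrict_preimage (hN i)]
    _ ≤ 1 / (Real.exp 1 * Δ) := (hp i).le
    _ ≤ 1 / (Real.exp 1 * ((Δ - 1 : ℕ) + 1)) := by
        rcases Δ with _ | d
        · simpa using (Real.exp_pos 1).le
        · simp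

end FiniteColours

/-- **Lovász Local Lemma** (Theorem 1.1 of the paper).  `Adj` is the (symmetric) edge relation
of a locally finite undirected graph on `V`; `N x = {y | Adj x y}` is the neighbourhood of `x`;
`R x` is a set of functions `N x → Fin b` (a local rule); `p x = 1 − |R x| / b ^ |N x|`;
`Δ` is the (finite) supremum of the degrees in the graph `Rel(G)` joining `x` and `y`
whenever `N x ∩ N y ≠ ∅` (with `x = y` allowed).  If `p x < 1 / (e·Δ)` for all `x`, then
there is `f : V → Fin b` whose restriction to each `N x` lies in `R x`. -/
theorem lovasz_local_lemma {V : Type*} (Adj : V → V → Prop)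
    (hsymm : ∀ x y, Adj x y → Adj y x)
    (hloc : ∀ x : V, {y | Adj x y}.Finite)
    (b : ℕ) (hb : 2 ≤ b)
    (R : ∀ x : V, Set (↥{y | Adj x y} → Fin b))
    (Δ : ℕ)
    (hrelfin : ∀ x : V, {y | ({z | Adj x z} ∩ {z | Adj y z}).Nonempty}.Finite)
    (hbdd : BddAbove (Set.range fun x : V => {y | ({z | Adj x z} ∩ {z | Adj y z}).Nonempty}.ncard))
    (hΔ : Δ = sSup (Set.range fun x : V => {y | ({z | Adj x z} ∩ {z | Adj y z}).Nonempty}.ncard))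
    (hp : ∀ x : V,
      1 - ((R x).ncard : ℝ) / (b : ℝ) ^ ({y | Adj x y}.ncard) < 1 / (Real.exp 1 * Δ)) :
    ∃ f : V → Fin b, ∀ x : V, (fun y : ↥{y | Adj x y} => f y.val) ∈ R x := by
  have : NeZero b := ⟨by omega⟩
  exact lovasz_local_lemma_general (fun x ↦ {y | Adj x y}) hloc R Δ
    (fun x ↦ (hrelfin x).cast_ncard_eq ▸ Nat.cast_le.2 (hΔ ▸ le_csSup hbdd ⟨x, rfl⟩))
    (by simpa only [Nat.card_fin] using hp)
end

section
/- Let n ≥ 1, let T ⊆ ℝ^n be a finite nonempty set of vectors, and let b ≥ 1 be an integer such that b·(1 − 1/b)^{|T|} < 1/(e·|T|²), where e is Euler's number. Then there exists a b-coloring f : ℝ^n → {0,…,b−1} such that for every x ∈ ℝ^n the set x + T is multicolored, i.e., for every color c ∈ {0,…,b−1} there exists t ∈ T with f(x+t) = c. -/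
/-!
Color the points of `ℝⁿ` independently and uniformly at random. A given translate `x + T` misses
some color with probability at most `b (1 - 1/b) ^ |T|`, and it is independent of all the
translates disjoint from it, that is, of all but the at most `|T|² - |T|` translates by
`x + t - t'` with `t ≠ t'` in `T`. The Lovász local lemma therefore makes any finitely many
translates multicolored simultaneously with positive probability, and compactness of the space of
colorings handles all translates at once.
-/

open MeasureTheory ProbabilityTheory

section LocalLemma

variable {Ω ι : Type*} [MeasurableSpace Ω] {μ : Measure Ω} {A : ι → Set Ω} {x : ι → ℝ}

lemma one_sub_mul_measureReal_le_compl_inter [IsFiniteMeasure μ] {E B : Set Ω} {r : ℝ}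
    (hE : MeasurableSet E) (h : μ.real (E ∩ B) ≤ r * μ.real B) :
    (1 - r) * μ.real B ≤ μ.real (Eᶜ ∩ B) := by
  have hsplit := measureReal_inter_add_sdiff (μ := μ) (s := B) hE
  rw [Set.inter_comm, Set.sdiff_eq, Set.inter_comm B] at hsplit
  linarith

lemma prod_one_sub_mul_measureReal_le_biInter_compl [DecidableEq ι] [IsFiniteMeasure μ]
    (hA : ∀ i, MeasurableSet (A i)) (hx : ∀ i, x i ≤ 1) {K L : Finset ι} (hKL : Disjoint K L)
    (h : ∀ i ∈ K, ∀ M ⊆ K ∪ L, i ∉ M →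
      μ.real (A i ∩ ⋂ j ∈ M, (A j)ᶜ) ≤ x i * μ.real (⋂ j ∈ M, (A j)ᶜ)) :
    (∏ i ∈ K, (1 - x i)) * μ.real (⋂ j ∈ L, (A j)ᶜ) ≤ μ.real (⋂ j ∈ K ∪ L, (A j)ᶜ) := by
  induction K using Finset.induction_on with
  | empty => simp
  | insert i K hi ih =>
    obtain ⟨hiL, hKL⟩ := Finset.disjoint_insert_left.1 hKL
    have hsub : K ∪ L ⊆ insert i K ∪ L :=
      Finset.union_subset_union_left (Finset.subset_insert i K)
    have hK := ih hKL fun j hj M hM ↦ h j (Finset.mem_insert_of_mem hj) M (hM.trans hsub)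
    have hcond := h i (Finset.mem_insert_self i K) (K ∪ L) hsub (by simp [hi, hiL])
    calc (∏ j ∈ insert i K, (1 - x j)) * μ.real (⋂ j ∈ L, (A j)ᶜ)
        = (1 - x i) * ((∏ j ∈ K, (1 - x j)) * μ.real (⋂ j ∈ L, (A j)ᶜ)) := by
          rw [Finset.prod_insert hi, mul_assoc]
      _ ≤ (1 - x i) * μ.real (⋂ j ∈ K ∪ L, (A j)ᶜ) :=
          mul_le_mul_of_nonneg_left hK (sub_nonneg.2 (hx i))
      _ ≤ μ.real ((A i)ᶜ ∩ ⋂ j ∈ K ∪ L, (A j)ᶜ) :=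
          one_sub_mul_measureReal_le_compl_inter (hA i) hcond
      _ = μ.real (⋂ j ∈ insert i K ∪ L, (A j)ᶜ) := by
          rw [Finset.insert_union, Finset.set_biInter_insert]

lemma measureReal_inter_biInter_compl_le [IsFiniteMeasure μ] {Γ : ι → Finset ι}
    (hA : ∀ i, MeasurableSet (A i)) (hx : ∀ i, x i ∈ Set.Icc 0 1)
    (h : ∀ i, ∀ J : Finset ι, i ∉ J → Disjoint (Γ i) J →
      μ.real (A i ∩ ⋂ j ∈ J, (A j)ᶜ) ≤ (x i * ∏ j ∈ Γ i, (1 - x j)) * μ.real (⋂ j ∈ J, (A j)ᶜ))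
    {i : ι} {J : Finset ι} (hi : i ∉ J) :
    μ.real (A i ∩ ⋂ j ∈ J, (A j)ᶜ) ≤ x i * μ.real (⋂ j ∈ J, (A j)ᶜ) := by
  classical
  induction J using Finset.strongInduction generalizing i with
  | H J ih =>
    -- Apply `h` to the indices of `J` outside `Γ i`; by induction, also avoiding the events indexed
    -- by `J ∩ Γ i` shrinks the probability by at most the factor that `h` provides for.
    have hsplit : J ∩ Γ i ∪ J \ Γ i = J := by
      rw [Finset.union_comm, Finset.sdiff_union_inter]
    have hnear : (∏ j ∈ J ∩ Γ i, (1 - x j)) * μ.real (⋂ j ∈ J \ Γ i, (A j)ᶜ)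
        ≤ μ.real (⋂ j ∈ J, (A j)ᶜ) := by
      conv_rhs => rw [← hsplit]
      refine prod_one_sub_mul_measureReal_le_biInter_compl hA (fun j ↦ (hx j).2)
        (Finset.disjoint_sdiff_inter J (Γ i)).symm fun j hj M hM hjM ↦ ih M ?_ hjM
      rw [hsplit] at hM
      exact Finset.ssubset_iff_subset_ne.2
        ⟨hM, fun hMJ ↦ hjM (hMJ ▸ Finset.mem_of_mem_inter_left hj)⟩
    calc μ.real (A i ∩ ⋂ j ∈ J, (A j)ᶜ)
        ≤ μ.real (A i ∩ ⋂ j ∈ J \ Γ i, (A j)ᶜ) :=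
          measureReal_mono (Set.inter_subset_inter_right _
            (Set.biInter_subset_biInter_left fun _ hj ↦ (Finset.mem_sdiff.1 hj).1))
      _ ≤ (x i * ∏ j ∈ Γ i, (1 - x j)) * μ.real (⋂ j ∈ J \ Γ i, (A j)ᶜ) :=
          h i _ (fun hiJ ↦ hi (Finset.mem_sdiff.1 hiJ).1) Finset.disjoint_sdiff
      _ ≤ (x i * ∏ j ∈ J ∩ Γ i, (1 - x j)) * μ.real (⋂ j ∈ J \ Γ i, (A j)ᶜ) := by
          refine mul_le_mul_of_nonneg_right (mul_le_mul_of_nonneg_left ?_ (hx i).1)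
            measureReal_nonneg
          exact Finset.prod_le_prod_of_subset_of_le_one Finset.inter_subset_right
            (fun j _ ↦ sub_nonneg.2 (hx j).2) fun j _ _ ↦ sub_le_self 1 (hx j).1
      _ ≤ x i * μ.real (⋂ j ∈ J, (A j)ᶜ) := by
          rw [mul_assoc]
          exact mul_le_mul_of_nonneg_left hnear (hx i).1

theorem lovasz_local_lemma_s1 [IsProbabilityMeasure μ] {Γ : ι → Finset ι}
    (hA : ∀ i, MeasurableSet (A i)) (hx : ∀ i, x i ∈ Set.Icc 0 1)
    (h : ∀ i, ∀ J : Finset ι, i ∉ J → Disjoint (Γ i) J →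
      μ.real (A i ∩ ⋂ j ∈ J, (A j)ᶜ) ≤ (x i * ∏ j ∈ Γ i, (1 - x j)) * μ.real (⋂ j ∈ J, (A j)ᶜ))
    (J : Finset ι) :
    ∏ i ∈ J, (1 - x i) ≤ μ.real (⋂ i ∈ J, (A i)ᶜ) := by
  classical
  simpa using prod_one_sub_mul_measureReal_le_biInter_compl hA (fun i ↦ (hx i).2)
    (Finset.disjoint_empty_right J) fun _ _ _ _ ↦ measureReal_inter_biInter_compl_le hA hx h

lemma exp_neg_one_le_one_sub_one_div_pow (d : ℕ) :
    Real.exp (-1) ≤ (1 - 1 / ((d : ℝ) + 1)) ^ d := by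
  rcases eq_or_ne d 0 with rfl | hd
  · simp
  have hbase : 1 - 1 / ((d : ℝ) + 1) = (1 + (d : ℝ)⁻¹)⁻¹ := by field_simp; ring
  rw [hbase, inv_pow, Real.exp_neg]
  exact inv_anti₀ (by positivity) Real.one_add_inv_pow_le_exp

/-- The optimal weight is `1 / (d + 1)`, except that `d = 0` would make it equal to `1`. -/
lemma exists_le_mul_one_sub_pow {p : ℝ} {d : ℕ} (hp : Real.exp 1 * p * (d + 1) ≤ 1) :
    ∃ r ∈ Set.Ico (0 : ℝ) 1, p ≤ r * (1 - r) ^ d := by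
  have hp' : p ≤ 1 / ((d : ℝ) + 1) * Real.exp (-1) := by
    rw [Real.exp_neg, ← one_div, one_div_mul_one_div, le_div_iff₀ (by positivity)]
    linarith
  rcases eq_or_ne d 0 with rfl | hd
  · exact ⟨Real.exp (-1), ⟨by positivity, Real.exp_lt_one_iff.2 (by norm_num)⟩, by simpa using hp'⟩
  · refine ⟨1 / ((d : ℝ) + 1), ⟨by positivity, ?_⟩, hp'.trans ?_⟩
    · rw [div_lt_one (by positivity)]
      exact lt_add_of_pos_left 1 (by positivity)
    · exact mul_le_mul_of_nonneg_left (exp_neg_one_le_one_sub_one_div_pow d) (by positivity)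

theorem symmetric_lovasz_local_lemma [IsProbabilityMeasure μ] {Γ : ι → Finset ι} {p : ℝ} {d : ℕ}
    (hA : ∀ i, MeasurableSet (A i)) (hΓ : ∀ i, (Γ i).card ≤ d)
    (hind : ∀ i, ∀ J : Finset ι, i ∉ J → Disjoint (Γ i) J →
      IndepSet (A i) (⋂ j ∈ J, (A j)ᶜ) μ)
    (hAp : ∀ i, μ.real (A i) ≤ p) (hp : Real.exp 1 * p * (d + 1) ≤ 1) (J : Finset ι) :
    0 < μ.real (⋂ i ∈ J, (A i)ᶜ) := by
  obtain ⟨r, ⟨hr0, hr1⟩, hpr⟩ := exists_le_mul_one_sub_pow hp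
  have hprod (i : ι) : μ.real (A i) ≤ r * ∏ _j ∈ Γ i, (1 - r) := by
    rw [Finset.prod_const]
    refine (hAp i).trans (hpr.trans (mul_le_mul_of_nonneg_left ?_ hr0))
    exact pow_le_pow_of_le_one (sub_nonneg.2 hr1.le) (sub_le_self 1 hr0) (hΓ i)
  refine (Finset.prod_pos fun _ _ ↦ sub_pos.2 hr1).trans_le
    (lovasz_local_lemma_s1 (Γ := Γ) hA (fun _ ↦ ⟨hr0, hr1.le⟩) (fun i J hi hJ ↦ ?_) J)
  rw [measureReal_def, (hind i J hi hJ).measure_inter_eq_mul, ENNReal.toReal_mul]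
  exact mul_le_mul_of_nonneg_right (hprod i) measureReal_nonneg

end LocalLemma

/-- A set `U` is multicolored by `f` if it contains points of every color. The colors are the
elements of an arbitrary type `κ`, with `κ = Fin b` for a `b`-coloring. -/
def Multicolored {V κ : Type*} (f : V → κ) (U : Set V) : Prop :=
  ∀ c, ∃ v ∈ U, f v = c

section RandomColoring

variable {V κ ι : Type*}

lemma setOf_multicolored (U : Set V) :
    {f : V → κ | Multicolored f U} = ⋂ c, ⋃ v ∈ U, {f | f v = c} := by
  ext f
  simp [Multicolored]

variable [MeasurableSpace κ] [MeasurableSingletonClass κ]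

lemma measurableSet_comap_restrict_multicolored [Countable κ] {U W : Finset V} (hUW : U ⊆ W) :
    MeasurableSet[MeasurableSpace.comap W.restrict MeasurableSpace.pi]
      {f : V → κ | Multicolored f U} := by
  rw [setOf_multicolored]
  refine MeasurableSet.iInter fun c ↦ Finset.measurableSet_biUnion U fun v hv ↦ ?_
  exact ⟨(fun g ↦ g ⟨v, hUW hv⟩) ⁻¹' {c}, measurable_pi_apply _ (measurableSet_singleton c), rfl⟩

lemma measurableSet_multicolored [Countable κ] (U : Finset V) :
    MeasurableSet {f : V → κ | Multicolored f U} :=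
  (Finset.measurable_restrict U).comap_le _
    (measurableSet_comap_restrict_multicolored subset_rfl)

variable (P : V → Measure κ) [∀ v, IsProbabilityMeasure (P v)]

lemma indepSet_infinitePi_multicolored [Countable κ] {U : Finset V} {S : ι → Finset V}
    {J : Finset ι} (hJ : ∀ j ∈ J, Disjoint U (S j)) :
    IndepSet {f | Multicolored f U}ᶜ (⋂ j ∈ J, {f | Multicolored f (S j)})
      (Measure.infinitePi P) := by
  classical
  have hcoord : iIndepFun (fun v (f : V → κ) ↦ f v) (Measure.infinitePi P) :=
    iIndepFun_infinitePi (X := fun _ ↦ id) fun _ ↦ measurable_id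
  have hdisj : Disjoint U (J.biUnion S) := (Finset.disjoint_biUnion_right U J S).2 hJ
  have hblocks := hcoord.indepFun_finset U (J.biUnion S) hdisj measurable_pi_apply
  refine Indep.indepSet_of_measurableSet ((IndepFun_iff_Indep _ _ _).1 hblocks)
    (measurableSet_comap_restrict_multicolored subset_rfl).compl ?_
  exact Finset.measurableSet_biInter J fun j hj ↦
    measurableSet_comap_restrict_multicolored (Finset.subset_biUnion_of_mem S hj)

lemma infinitePi_real_forall_ne (U : Finset V) (c : κ) :
    (Measure.infinitePi P).real {f | ∀ v ∈ U, f v ≠ c} = ∏ v ∈ U, (1 - (P v).real {c}) := by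
  have hbox : {f : V → κ | ∀ v ∈ U, f v ≠ c} = Set.pi U fun _ ↦ {c}ᶜ := by
    ext f
    simp
  rw [hbox, measureReal_def,
    Measure.infinitePi_pi P fun _ _ ↦ (measurableSet_singleton c).compl, ENNReal.toReal_prod]
  exact Finset.prod_congr rfl fun v _ ↦ probReal_compl_eq_one_sub (measurableSet_singleton c)

lemma infinitePi_real_compl_multicolored_le [Fintype κ] (U : Finset V) :
    (Measure.infinitePi P).real {f | Multicolored f U}ᶜ
      ≤ ∑ c, ∏ v ∈ U, (1 - (P v).real {c}) := by
  have hmiss : {f : V → κ | Multicolored f U}ᶜ = ⋃ c, {f | ∀ v ∈ U, f v ≠ c} := by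
    ext f
    simp [Multicolored]
  simp only [hmiss, ← infinitePi_real_forall_ne]
  exact measureReal_iUnion_fintype_le _

end RandomColoring

section Hypergraph

variable {V κ ι : Type*}

lemma exists_forall_multicolored_of_finset [Finite κ] {S : ι → Finset V}
    (h : ∀ J : Finset ι, ∃ f : V → κ, ∀ i ∈ J, Multicolored f (S i)) :
    ∃ f : V → κ, ∀ i, Multicolored f (S i) := by
  let _ : TopologicalSpace κ := ⊥
  have : DiscreteTopology κ := ⟨rfl⟩
  have hclosed (i : ι) : IsClosed {f : V → κ | Multicolored f (S i)} := by
    rw [setOf_multicolored]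
    exact isClosed_iInter fun c ↦ (S i).finite_toSet.isClosed_biUnion fun v _ ↦
      isClosed_eq (continuous_apply v) continuous_const
  obtain ⟨f, hf⟩ := CompactSpace.iInter_nonempty hclosed fun J ↦
    (h J).imp fun f hf ↦ Set.mem_iInter₂.2 hf
  exact ⟨f, Set.mem_iInter.1 hf⟩

variable [Fintype κ] [Nonempty κ] {S : ι → Finset V} {Γ : ι → Finset ι} {k d : ℕ}

theorem exists_forall_multicolored (hS : ∀ i, k ≤ (S i).card) (hΓ : ∀ i, (Γ i).card ≤ d)
    (hmeet : ∀ i j, i ≠ j → ¬Disjoint (S i) (S j) → j ∈ Γ i)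
    (h : Real.exp 1 * (Fintype.card κ * (1 - 1 / (Fintype.card κ : ℝ)) ^ k) * (d + 1) ≤ 1) :
    ∃ f : V → κ, ∀ i, Multicolored f (S i) := by
  let _ : MeasurableSpace κ := ⊤
  let P (_ : V) : Measure κ := (PMF.uniformOfFintype κ).toMeasure
  have hunif (c : κ) : (PMF.uniformOfFintype κ).toMeasure.real {c} = 1 / Fintype.card κ := by
    rw [measureReal_def, PMF.toMeasure_apply_singleton _ _ (measurableSet_singleton c)]
    simp
  have hP (i : ι) : (Measure.infinitePi P).real {f | Multicolored f (S i)}ᶜ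
      ≤ Fintype.card κ * (1 - 1 / (Fintype.card κ : ℝ)) ^ k := by
    refine (infinitePi_real_compl_multicolored_le P (S i)).trans ?_
    have hb : 1 / (Fintype.card κ : ℝ) ≤ 1 :=
      div_le_self zero_le_one (by exact_mod_cast Fintype.card_pos)
    simp only [P, hunif, Finset.prod_const, Finset.sum_const, Finset.card_univ, nsmul_eq_mul]
    exact mul_le_mul_of_nonneg_left (pow_le_pow_of_le_one (sub_nonneg.2 hb)
      (sub_le_self 1 (by positivity)) (hS i)) (Nat.cast_nonneg (Fintype.card κ))
  refine exists_forall_multicolored_of_finset fun J ↦ ?_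
  have hpos := symmetric_lovasz_local_lemma (fun i ↦ (measurableSet_multicolored (S i)).compl) hΓ
    (fun i J hi hJ ↦ ?_) hP h J
  · obtain ⟨f, hf⟩ := nonempty_of_measureReal_ne_zero hpos.ne'
    exact ⟨f, by simpa using hf⟩
  · simp only [compl_compl]
    refine indepSet_infinitePi_multicolored P fun j hj ↦ ?_
    by_contra hij
    exact Finset.disjoint_right.1 hJ hj (hmeet i j (ne_of_mem_of_not_mem hj hi).symm hij)

end Hypergraph

lemma mem_image_offDiag_of_not_disjoint_map {E : Type*} [AddGroup E] [DecidableEq E] {T : Finset E}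
    {x y : E} (hxy : x ≠ y)
    (h : ¬Disjoint (T.map (addLeftEmbedding x)) (T.map (addLeftEmbedding y))) :
    y ∈ T.offDiag.image fun z ↦ x + z.1 - z.2 := by
  simp only [Finset.not_disjoint_iff, Finset.mem_map, addLeftEmbedding_apply] at h
  obtain ⟨_, ⟨t, ht, rfl⟩, t', ht', htt'⟩ := h
  have hne : t ≠ t' := fun heq ↦ hxy (add_right_cancel (heq ▸ htt')).symm
  exact Finset.mem_image.2 ⟨(t, t'), Finset.mem_offDiag.2 ⟨ht, ht', hne⟩, by simp [← htt']⟩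

lemma one_div_exp_mul_sq_le {k : ℝ} (hk : 1 ≤ k) :
    1 / (Real.exp 1 * k ^ 2) ≤ 1 / (Real.exp 1 * (k * (k - 1) + 1)) :=
  one_div_le_one_div_of_le (mul_pos (Real.exp_pos 1) (by nlinarith))
    (mul_le_mul_of_nonneg_left (by linarith) (Real.exp_pos 1).le)

theorem multicolored_translates_general {E κ : Type*} [AddGroup E] [Fintype κ] [Nonempty κ]
    (T : Finset E)
    (h : (Fintype.card κ : ℝ) * (1 - 1 / (Fintype.card κ : ℝ)) ^ T.card
      ≤ 1 / (Real.exp 1 * ((T.card : ℝ) * (T.card - 1) + 1))) :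
    ∃ f : E → κ, ∀ x : E, ∀ c : κ, ∃ t ∈ T, f (x + t) = c := by
  classical
  have hoff : (T.offDiag.card : ℝ) = T.card * (T.card - 1) := by
    rw [Finset.offDiag_card, Nat.cast_sub (Nat.le_mul_self _)]
    push_cast
    ring
  rw [← hoff, le_div_iff₀ (by positivity)] at h
  obtain ⟨f, hf⟩ := exists_forall_multicolored (κ := κ)
    (fun x ↦ (T.card_map (addLeftEmbedding x)).ge) (fun _ ↦ Finset.card_image_le)
    (fun _ _ ↦ mem_image_offDiag_of_not_disjoint_map) (by linarith)
  refine ⟨f, fun x c ↦ ?_⟩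
  obtain ⟨_, hv, hfv⟩ := hf x c
  obtain ⟨t, ht, rfl⟩ := Finset.mem_map.1 (Finset.mem_coe.1 hv)
  exact ⟨t, ht, hfv⟩

/-- Corollary 1.2 of the paper (Erdős–Lovász).  If `T ⊆ ℝⁿ` is a finite nonempty set of vectors
and `b ≥ 1` satisfies `b·(1 − 1/b)^|T| < 1/(e·|T|²)`, then there is a `b`-coloring
`f : ℝⁿ → {0,…,b−1}` such that every translate `x + T` is multicolored. -/
theorem multicolored_translates (n : ℕ) (hn : 1 ≤ n)
    (T : Finset (Fin n → ℝ)) (hT : T.Nonempty)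
    (b : ℕ) (hb : 1 ≤ b)
    (hineq : (b : ℝ) * (1 - 1 / (b : ℝ)) ^ T.card
      < 1 / (Real.exp 1 * (T.card : ℝ) ^ 2)) :
    ∃ f : (Fin n → ℝ) → Fin b,
      ∀ x : Fin n → ℝ, ∀ c : Fin b, ∃ t ∈ T, f (x + t) = c := by
  have : Nonempty (Fin b) := ⟨⟨0, hb⟩⟩
  have hcard : (1 : ℝ) ≤ T.card := by exact_mod_cast hT.card_pos
  exact multicolored_translates_general T <| by
    simpa only [Fintype.card_fin] using hineq.le.trans (one_div_exp_mul_sq_le hcard)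
end

section
/- Let n ≥ 1, let T ⊆ ℝ^n be a finite nonempty set of vectors, and let b ≥ 1 be an integer such that b·(1 − 1/b)^{|T|} < 1/(e·|T|²), where e is Euler's number. Then there exists a Borel measurable b-coloring f : ℝ^n → {0,…,b−1} such that for every x ∈ ℝ^n the set x + T is multicolored, i.e., for every color c ∈ {0,…,b−1} there exists t ∈ T with f(x+t) = c. -/
/-!
The Lovász local lemma, made measurable: run the Moser–Tardos algorithm in parallel at all points
of the space, with the random colors read off a finite table. The colors used at `y` are indexed by
a measurable label `c y` taking finitely many values and separating nearby points, so that a table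
decides every resampling and, for each table, all the rounds are Borel.

If the translate by `x` still misses a color after `L` rounds, its history forms `L + 1` layers of
pairwise disjoint translates, each missing a color when it was resampled. For a fixed `x`, the
proportion of tables producing such a history for some choice of layers is at most `r ^ (L + 1)`
with `r = b * (1 - 1 / b) ^ m * e * m ^ 2 < 1` and `m = #T`, because a translate meets at most
`m ^ 2` others. The points `x` need not be treated one by one: the label is `⌊v x⌋` modulo an
integer for a linear functional `v`, so the labels around `x` form only polynomially many patterns
in `L`. For large `L` some table therefore works for every `x` at once.
-/

open MeasureTheory Set
open scoped Finset Pointwise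

namespace MulticoloredTranslates

section Label

lemma volume_setOf_abs_mul_sub_intCast_lt_le {a S η : ℝ} (ha : a ≠ 0) (hS : 6 ≤ S * |a|)
    (hη₀ : 0 ≤ η) (hη₁ : η ≤ 1) :
    volume {s ∈ Icc 0 S | ∃ k : ℤ, |s * a - k| < η} ≤ ENNReal.ofReal (5 * η * S) := by
  have ha' : 0 < |a| := abs_pos.2 ha
  set K : ℤ := ⌈S * |a|⌉
  have hcover : {s ∈ Icc 0 S | ∃ k : ℤ, |s * a - k| < η} ⊆
      ⋃ k ∈ Finset.Icc (-K) K, Metric.ball ((k : ℝ) / a) (η / |a|) := by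
    rintro s ⟨⟨hs₀, hs⟩, k, hk⟩
    refine mem_iUnion₂.2 ⟨k, Finset.mem_Icc.2 (abs_le.1 ?_), ?_⟩
    · have hsa : |s * a| ≤ S * |a| := by
        rw [abs_mul, abs_of_nonneg hs₀]
        gcongr
      have hk' : ((|k| : ℤ) : ℝ) < K + 1 := by
        have := abs_sub_abs_le_abs_sub (k : ℝ) (s * a)
        rw [abs_sub_comm] at this
        push_cast
        linarith [Int.le_ceil (S * |a|)]
      exact Int.lt_add_one_iff.1 (mod_cast hk')
    · rwa [Metric.mem_ball, Real.dist_eq, lt_div_iff₀ ha', ← abs_mul, sub_mul,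
        div_mul_cancel₀ _ ha]
  have hcount : (#(Finset.Icc (-K) K) : ℝ) ≤ 2 * (S * |a|) + 3 := by
    have hK₀ : 0 ≤ K := Int.ceil_nonneg (by linarith)
    have hcard : (#(Finset.Icc (-K) K) : ℤ) = 2 * K + 1 := by rw [Int.card_Icc]; lia
    have hcard' : (#(Finset.Icc (-K) K) : ℝ) = 2 * K + 1 := mod_cast hcard
    linarith [Int.ceil_lt_add_one (S * |a|)]
  calc volume {s ∈ Icc 0 S | ∃ k : ℤ, |s * a - k| < η}
      ≤ ∑ k ∈ Finset.Icc (-K) K, volume (Metric.ball ((k : ℝ) / a) (η / |a|)) :=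
        (measure_mono hcover).trans (measure_biUnion_finset_le _ _)
    _ = ENNReal.ofReal (#(Finset.Icc (-K) K) * (2 * (η / |a|))) := by
        simp_rw [Real.volume_ball, Finset.sum_const, nsmul_eq_mul]
        rw [ENNReal.ofReal_mul (Nat.cast_nonneg _), ENNReal.ofReal_natCast]
    _ ≤ ENNReal.ofReal (5 * η * S) := by
        refine ENNReal.ofReal_le_ofReal ?_
        calc (#(Finset.Icc (-K) K) : ℝ) * (2 * (η / |a|))
            ≤ 5 / 2 * (S * |a|) * (2 * (η / |a|)) := by gcongr; linarith
          _ = 5 * η * S := by field_simp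

lemma exists_forall_le_abs_mul_sub_intCast (A : Finset ℝ) (hA : 0 ∉ A) :
    ∃ s : ℝ, ∀ a ∈ A, ∀ k : ℤ, 1 / (5 * #A + 1 : ℝ) ≤ |s * a - k| := by
  set η : ℝ := 1 / (5 * #A + 1) with hη
  have hη₁ : η ≤ 1 := by
    rw [hη, div_le_one (by positivity)]
    linarith [(#A).cast_nonneg (α := ℝ)]
  set S : ℝ := ∑ a ∈ A, 6 / |a| + 1 with hS
  have hS₀ : 0 < S := by positivity
  have hne {a : ℝ} (ha : a ∈ A) : a ≠ 0 := ne_of_mem_of_not_mem ha hA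
  have hSa {a : ℝ} (ha : a ∈ A) : 6 ≤ S * |a| := by
    rw [← div_le_iff₀ (abs_pos.2 (hne ha))]
    have := Finset.single_le_sum (f := fun a : ℝ ↦ 6 / |a|) (fun _ _ ↦ by positivity) ha
    linarith
  by_contra! hcon
  have hcover : Icc 0 S ⊆ ⋃ a ∈ A, {s ∈ Icc 0 S | ∃ k : ℤ, |s * a - k| < η} := fun s hs ↦
    have ⟨a, ha, k, hk⟩ := hcon s
    mem_iUnion₂.2 ⟨a, ha, hs, k, hk⟩
  have hvol : ENNReal.ofReal S ≤ ENNReal.ofReal (#A * (5 * η * S)) :=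
    calc ENNReal.ofReal S = volume (Icc 0 S) := by rw [Real.volume_Icc, sub_zero]
      _ ≤ ∑ a ∈ A, volume {s ∈ Icc 0 S | ∃ k : ℤ, |s * a - k| < η} :=
        (measure_mono hcover).trans (measure_biUnion_finset_le _ _)
      _ ≤ ∑ _a ∈ A, ENNReal.ofReal (5 * η * S) := Finset.sum_le_sum fun a ha ↦
        volume_setOf_abs_mul_sub_intCast_lt_le (hne ha) (hSa ha) (by positivity) hη₁
      _ = ENNReal.ofReal (#A * (5 * η * S)) := by
        rw [Finset.sum_const, nsmul_eq_mul, ENNReal.ofReal_mul (Nat.cast_nonneg _),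
          ENNReal.ofReal_natCast]
  have hle : S ≤ #A * (5 * η * S) := (ENNReal.ofReal_le_ofReal_iff (by positivity)).1 hvol
  have hlt : #A * (5 * η) < 1 := by
    rw [hη, mul_one_div, mul_div_assoc', div_lt_one (by positivity)]
    linarith
  nlinarith

lemma floor_add_eq_add_ite (a g : ℝ) :
    ⌊a + g⌋ = ⌊a⌋ + ⌊g⌋ + if 1 ≤ Int.fract a + Int.fract g then 1 else 0 := by
  have ha := Int.floor_add_fract a
  have hg := Int.floor_add_fract g
  rw [Int.floor_eq_iff]
  split_ifs with h <;> push_cast <;> constructor <;>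
    linarith [Int.fract_nonneg a, Int.fract_lt_one a, Int.fract_nonneg g, Int.fract_lt_one g]

lemma intCast_floor_add_ne {N : ℕ} {g : ℝ} (hg : ∀ k : ℤ, 1 ≤ |g - N * k|) (a : ℝ) :
    (⌊a + g⌋ : ZMod N) ≠ ⌊a⌋ := by
  intro h
  obtain ⟨k, hk⟩ := (ZMod.intCast_eq_intCast_iff_dvd_sub _ _ _).1 h.symm
  have hk' : (⌊a + g⌋ : ℝ) - ⌊a⌋ = N * k := mod_cast hk
  refine (hg k).not_gt (abs_lt.2 ?_)
  constructor <;>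
    linarith [Int.floor_le a, Int.lt_floor_add_one a, Int.floor_le (a + g),
      Int.lt_floor_add_one (a + g)]

/- The sets of `g` which carry are nested as `a` varies, so their size determines them. -/
lemma intCast_floor_add_eq_of_card_eq {N : ℕ} {G : Finset ℝ} {a a' : ℝ}
    (hfloor : (⌊a⌋ : ZMod N) = ⌊a'⌋)
    (hcard : #{g ∈ G | 1 ≤ Int.fract a + Int.fract g} =
      #{g ∈ G | 1 ≤ Int.fract a' + Int.fract g}) {g : ℝ} (hg : g ∈ G) :
    (⌊a + g⌋ : ZMod N) = ⌊a' + g⌋ := by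
  wlog h : Int.fract a ≤ Int.fract a' generalizing a a'
  · exact (this hfloor.symm hcard.symm (le_of_not_ge h)).symm
  have hsets := Finset.eq_of_subset_of_card_le
    (Finset.monotone_filter_right G fun g _ (hg : 1 ≤ Int.fract a + Int.fract g) ↦
      show 1 ≤ Int.fract a' + Int.fract g by linarith) hcard.ge
  have hiff := Finset.filter_inj'.1 hsets hg
  simp only [floor_add_eq_add_ite, hiff, Int.cast_add, hfloor]

lemma exists_finset_representatives {α Q : Type*} [Fintype Q] (key : α → Q) :
    ∃ X : Finset α, #X ≤ Fintype.card Q ∧ ∀ a, ∃ a' ∈ X, key a = key a' := by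
  obtain ⟨X, himage, hinj⟩ := exists_image_eq_and_injOn univ key
  have hfin : X.Finite := .of_finite_image (toFinite _) hinj
  refine ⟨hfin.toFinset, ?_, fun a ↦ ?_⟩
  · exact Finset.card_le_card_of_injOn (t := Finset.univ) key (by simp) (by simpa using hinj)
  · obtain ⟨a', ha', h⟩ := himage ▸ mem_image_of_mem key (mem_univ a)
    exact ⟨a', by simpa using ha', h.symm⟩

variable {V : Type*} [AddCommGroup V] [Module ℝ V] [TopologicalSpace V] [SeparatingDual ℝ V]

lemma exists_strongDual_forall_ne_zero {F : Finset V} (hF : 0 ∉ F) :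
    ∃ u : StrongDual ℝ V, ∀ g ∈ F, u g ≠ 0 := by
  obtain ⟨u, hu⟩ := Module.Dual.exists_forall_ne_zero_of_forall_exists
    (fun g : F ↦ (topDualPairing ℝ V).flip (g : V)) fun g ↦
      SeparatingDual.exists_ne_zero (R := ℝ) (ne_of_mem_of_not_mem g.2 hF)
  exact ⟨u, fun g hg ↦ hu ⟨g, hg⟩⟩

lemma exists_strongDual_forall_one_le_abs_sub {F : Finset V} (hF : 0 ∉ F) :
    ∃ v : StrongDual ℝ V, ∀ g ∈ F, ∀ k : ℤ, 1 ≤ |v g - (5 * #F + 1 : ℕ) * k| := by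
  obtain ⟨u, hu⟩ := exists_strongDual_forall_ne_zero hF
  obtain ⟨s, hs⟩ := exists_forall_le_abs_mul_sub_intCast (F.image u) (by simpa using hu)
  set N : ℕ := 5 * #F + 1 with hN
  have hN₀ : (0 : ℝ) < N := by positivity
  refine ⟨(N * s) • u, fun g hg k ↦ ?_⟩
  calc (1 : ℝ) = N * (1 / N) := by field_simp
    _ ≤ N * (1 / (5 * #(F.image u) + 1)) := by
      gcongr
      rw [hN]
      push_cast
      gcongr
      exact Finset.card_image_le
    _ ≤ N * |s * u g - k| := by gcongr; exact hs _ (Finset.mem_image_of_mem u hg) k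
    _ = |((N * s) • u) g - N * k| := by
      rw [smul_apply, smul_eq_mul, mul_assoc, ← mul_sub, abs_mul, abs_of_pos hN₀]

/- The label of `x` is `⌊v x⌋` modulo `5 * #F + 1` for a continuous linear functional `v`. -/
lemma exists_measurable_label [MeasurableSpace V] [OpensMeasurableSpace V] {F : Finset V}
    (hF : 0 ∉ F) (G : Finset V) :
    ∃ c : V → ZMod (5 * #F + 1), Measurable c ∧ (∀ x, ∀ g ∈ F, c (x + g) ≠ c x) ∧
      ∃ X : Finset V, #X ≤ (5 * #F + 1) * (#G + 1) ∧
        ∀ x, ∃ x' ∈ X, ∀ g ∈ G, c (x + g) = c (x' + g) := by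
  obtain ⟨v, hv⟩ := exists_strongDual_forall_one_le_abs_sub hF
  let carries (x : V) : Finset ℝ := {g ∈ G.image v | 1 ≤ Int.fract (v x) + Int.fract g}
  have hcarries (x : V) : #(carries x) < #G + 1 :=
    Nat.lt_succ_of_le ((Finset.card_filter_le _ _).trans Finset.card_image_le)
  obtain ⟨X, hX, hrep⟩ := exists_finset_representatives
    fun x ↦ ((⌊v x⌋ : ZMod (5 * #F + 1)), (⟨#(carries x), hcarries x⟩ : Fin (#G + 1)))
  refine ⟨fun x ↦ ⌊v x⌋, ?_, fun x g hg ↦ ?_, X, ?_, fun x ↦ ?_⟩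
  · exact (measurable_from_top (f := fun z : ℤ ↦ (z : ZMod (5 * #F + 1)))).comp
      v.continuous.measurable.floor
  · simpa only [map_add] using intCast_floor_add_ne (hv g hg) (v x)
  · simpa only [Fintype.card_prod, ZMod.card, Fintype.card_fin] using hX
  · obtain ⟨x', hx', hkey⟩ := hrep x
    simp only [Prod.mk.injEq, Fin.mk.injEq] at hkey
    refine ⟨x', hx', fun g hg ↦ ?_⟩
    simpa only [map_add] using
      intCast_floor_add_eq_of_card_eq hkey.1 hkey.2 (Finset.mem_image_of_mem v hg)

end Label

section Packing

variable {V : Type*} [AddCommGroup V] {T : Finset V} {x y : V} {A B S : Set V}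

/-- The translates `x + T` and `y + T` meet: adjacency in the dependency graph of the events
that the translate of `T` by `x` misses a color. -/
def Overlap (T : Finset V) (x y : V) : Prop :=
  ∃ s ∈ T, ∃ t ∈ T, x + s = y + t

lemma Overlap.symm (h : Overlap T x y) : Overlap T y x := by
  obtain ⟨s, hs, t, ht, hst⟩ := h
  exact ⟨t, ht, s, hs, hst.symm⟩

lemma Overlap.refl (hT : T.Nonempty) (x : V) : Overlap T x x :=
  have ⟨t, ht⟩ := hT
  ⟨t, ht, t, ht, rfl⟩

lemma overlap_add_left_iff (z : V) : Overlap T (z + x) (z + y) ↔ Overlap T x y := by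
  simp only [Overlap, add_assoc, add_right_inj]

lemma overlap_iff_sub_mem [DecidableEq V] : Overlap T x y ↔ y - x ∈ T - T := by
  simp only [Overlap, Finset.mem_sub, eq_sub_iff_add_eq, sub_add_eq_add_sub, sub_eq_iff_eq_add,
    add_comm x]

lemma mem_add_sub_iff_exists_overlap [DecidableEq V] :
    x ∈ S + ((T - T : Finset V) : Set V) ↔ ∃ y ∈ S, Overlap T y x := by
  simp only [overlap_iff_sub_mem, mem_add, Finset.mem_coe]
  refine exists_congr fun y ↦ and_congr_right fun _ ↦ ⟨?_, fun h ↦ ⟨x - y, h, by abel⟩⟩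
  rintro ⟨d, hd, rfl⟩
  rwa [add_sub_cancel_left]

/-- The translates of `T` by the points of `S` are pairwise disjoint. -/
def IsPacking (T : Finset V) (S : Set V) : Prop :=
  ∀ x ∈ S, ∀ y ∈ S, Overlap T x y → x = y

/-- `S` indexes a maximal family of pairwise disjoint translates of `T` by points of `A`. -/
structure IsMaximalPacking (T : Finset V) (A S : Set V) : Prop where
  subset : S ⊆ A
  isPacking : IsPacking T S
  exists_overlap : ∀ x ∈ A, ∃ y ∈ S, Overlap T x y

lemma IsMaximalPacking.empty : IsMaximalPacking T ∅ ∅ :=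
  ⟨empty_subset _, fun _ h ↦ h.elim, fun _ h ↦ h.elim⟩

lemma IsMaximalPacking.union_diff [DecidableEq V] (hT : T.Nonempty) (hS : IsMaximalPacking T A S)
    (hB : IsPacking T B) :
    IsMaximalPacking T (A ∪ B) (S ∪ (B \ (S + ((T - T : Finset V) : Set V)))) where
  subset := union_subset_union hS.subset sdiff_subset
  isPacking := by
    rintro x (hx | ⟨hx, hxS⟩) y (hy | ⟨hy, hyS⟩) hxy
    · exact hS.isPacking x hx y hy hxy
    · exact (hyS (mem_add_sub_iff_exists_overlap.2 ⟨x, hx, hxy⟩)).elim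
    · exact (hxS (mem_add_sub_iff_exists_overlap.2 ⟨y, hy, hxy.symm⟩)).elim
    · exact hB x hx y hy hxy
  exists_overlap := by
    rintro x (hx | hx)
    · obtain ⟨y, hy, hxy⟩ := hS.exists_overlap x hx
      exact ⟨y, .inl hy, hxy⟩
    · by_cases hxS : x ∈ S + ((T - T : Finset V) : Set V)
      · obtain ⟨y, hy, hyx⟩ := mem_add_sub_iff_exists_overlap.1 hxS
        exact ⟨y, .inl hy, hyx.symm⟩
      · exact ⟨x, .inr ⟨hx, hxS⟩, .refl hT x⟩

lemma IsMaximalPacking.preimage_const_add (hS : IsMaximalPacking T A S) (z : V) :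
    IsMaximalPacking T ((z + ·) ⁻¹' A) ((z + ·) ⁻¹' S) where
  subset := preimage_mono hS.subset
  isPacking x hx y hy hxy :=
    add_left_cancel (hS.isPacking _ hx _ hy ((overlap_add_left_iff z).2 hxy))
  exists_overlap x hx := by
    obtain ⟨y, hy, hxy⟩ := hS.exists_overlap _ hx
    refine ⟨-z + y, by rwa [mem_preimage, add_neg_cancel_left], ?_⟩
    rwa [← overlap_add_left_iff z, add_neg_cancel_left]

lemma measurableSet_add_finset [MeasurableSpace V] [MeasurableAdd V] (hS : MeasurableSet S)
    (F : Finset V) : MeasurableSet (S + (F : Set V)) := by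
  rw [← iUnion_add_right_image]
  exact F.measurableSet_biUnion fun t _ ↦ (MeasurableEquiv.addRight t).measurableSet_image.2 hS

/- Greedily add the points of `A` one label at a time: points sharing a label never compete. -/
lemma exists_measurableSet_isMaximalPacking [MeasurableSpace V] [MeasurableAdd V] {κ : Type*}
    [Finite κ] [MeasurableSpace κ] [MeasurableSingletonClass κ] (hT : T.Nonempty) {c : V → κ}
    (hc : Measurable c) (hsep : ∀ x y, Overlap T x y → c x = c y → x = y)
    (hA : MeasurableSet A) : ∃ S, MeasurableSet S ∧ IsMaximalPacking T A S := by
  classical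
  have := Fintype.ofFinite κ
  suffices h : ∀ P : Finset κ, ∃ S, MeasurableSet S ∧ IsMaximalPacking T (A ∩ c ⁻¹' P) S by
    simpa only [Finset.coe_univ, preimage_univ, inter_univ] using h Finset.univ
  intro P
  induction P using Finset.induction with
  | empty =>
    refine ⟨∅, .empty, ?_⟩
    simpa only [Finset.coe_empty, preimage_empty, inter_empty] using IsMaximalPacking.empty
  | insert k P _ ih =>
    obtain ⟨S, hSm, hS⟩ := ih
    have hk : IsPacking T (A ∩ c ⁻¹' {k}) := fun x hx y hy hxy ↦
      hsep x y hxy (hx.2.trans hy.2.symm)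
    refine ⟨_, hSm.union ((hA.inter (hc (measurableSet_singleton k))).diff
      (measurableSet_add_finset hSm (T - T))), ?_⟩
    rw [Finset.coe_insert, insert_eq, union_comm, preimage_union, inter_union_distrib_left]
    exact hS.union_diff hT hk

end Packing

section Resampling

variable {V C : Type*} [AddCommGroup V] {T : Finset V} {S : ℕ → Set V} {φ : V → ℕ → C} {x y : V}
  {i : ℕ}

/-- The points `x` such that `x + T` is not multicolored with respect to `f`. -/
def deficient (T : Finset V) (f : V → C) : Set V :=
  {x | ∃ col, ∀ t ∈ T, f (x + t) ≠ col}

open Classical in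
/-- The number of times the color of `y` has been resampled before time `i`, if at each time `j`
the translates of `T` by the points of `S j` are resampled. -/
noncomputable def level (T : Finset V) (S : ℕ → Set V) (i : ℕ) (y : V) : ℕ :=
  Nat.count (fun j ↦ y ∈ S j + (T : Set V)) i

/-- A parallel run of the Moser–Tardos algorithm: `φ y` is the sequence of colors that `y` goes
through, and at each time `i` the translates of `T` by `S i`, a maximal packing among those missing
a color, are resampled. -/
def IsResampling (T : Finset V) (φ : V → ℕ → C) (S : ℕ → Set V) : Prop :=
  ∀ i, IsMaximalPacking T (deficient T fun y ↦ φ y (level T S i y)) (S i)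

open Classical in
lemma level_succ (T : Finset V) (S : ℕ → Set V) (i : ℕ) (y : V) :
    level T S (i + 1) y = level T S i y + if y ∈ S i + (T : Set V) then 1 else 0 :=
  Nat.count_succ _ _

lemma deficient_congr {f g : V → C} (h : ∀ t ∈ T, f (x + t) = g (x + t)) :
    x ∈ deficient T f ↔ x ∈ deficient T g := by
  refine exists_congr fun col ↦ forall₂_congr fun t ht ↦ ?_
  rw [h t ht]

lemma deficient_const_add (f : V → C) (z : V) :
    deficient T (fun y ↦ f (z + y)) = (z + ·) ⁻¹' deficient T f := by
  ext x
  simp only [deficient, mem_preimage, mem_ofPred_eq, add_assoc]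

lemma level_preimage_const_add (z : V) :
    level T (fun j ↦ (z + ·) ⁻¹' S j) i y = level T S i (z + y) := by
  classical
  have h (j : ℕ) : y ∈ (z + ·) ⁻¹' S j + (T : Set V) ↔ z + y ∈ S j + (T : Set V) := by
    simp only [← iUnion_add_right_image, mem_iUnion, image_add_right, mem_preimage, add_assoc]
  induction i with
  | zero => rfl
  | succ i ih => simp only [level_succ, ih, h]

lemma IsResampling.preimage_const_add (hS : IsResampling T φ S) (z : V) :
    IsResampling T (fun y ↦ φ (z + y)) fun i ↦ (z + ·) ⁻¹' S i := by
  intro i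
  simp only [level_preimage_const_add]
  rw [deficient_const_add fun y ↦ φ y (level T S i y)]
  exact (hS i).preimage_const_add z

lemma IsResampling.exists_overlap_of_mem_deficient_succ (hS : IsResampling T φ S)
    (hx : x ∈ deficient T fun y ↦ φ y (level T S (i + 1) y)) : ∃ y ∈ S i, Overlap T x y := by
  by_contra! hcon
  refine absurd ((hS i).exists_overlap x ?_) (by simpa using hcon)
  refine (deficient_congr fun t ht ↦ ?_).1 hx
  rw [level_succ, if_neg, add_zero]
  rintro ⟨y, hy, s, hs, hys⟩
  exact hcon y hy ⟨t, ht, s, hs, hys.symm⟩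

variable [MeasurableSpace V] [MeasurableAdd V]

lemma measurableSet_deficient [Countable C] [MeasurableSpace C] [MeasurableSingletonClass C]
    {f : V → C} (hf : Measurable f) : MeasurableSet (deficient T f) := by
  simp only [deficient, ofPred_exists, ofPred_forall]
  exact .iUnion fun col ↦ T.measurableSet_biInter fun t _ ↦
    (hf.comp (measurable_add_const t) (measurableSet_singleton col)).compl

lemma measurable_level (hS : ∀ j < i, MeasurableSet (S j)) : Measurable (level T S i) := by
  classical
  induction i with
  | zero => exact measurable_const
  | succ i ih =>
    rw [funext (level_succ T S i)]
    exact (ih fun j hj ↦ hS j (hj.trans i.lt_succ_self)).add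
      (measurable_const.ite (measurableSet_add_finset (hS i i.lt_succ_self) T) measurable_const)

lemma exists_isResampling [Countable C] [MeasurableSpace C] [MeasurableSingletonClass C]
    (hφ : Measurable fun p : V × ℕ ↦ φ p.1 p.2)
    (hmax : ∀ A : Set V, MeasurableSet A → ∃ S, MeasurableSet S ∧ IsMaximalPacking T A S) :
    ∃ S : ℕ → Set V, (∀ i, MeasurableSet (S i)) ∧ IsResampling T φ S := by
  classical
  have hstage (N : V → ℕ) (hN : Measurable N) :
      ∃ S, MeasurableSet S ∧ IsMaximalPacking T (deficient T fun y ↦ φ y (N y)) S :=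
    hmax _ (measurableSet_deficient (hφ.comp (measurable_id.prodMk hN)))
  choose! M hMm hM using hstage
  let N : ℕ → V → ℕ := fun i ↦ Nat.rec (fun _ ↦ 0)
    (fun _ N y ↦ N y + if y ∈ M N + (T : Set V) then 1 else 0) i
  have hlevel (i : ℕ) : N i = level T (fun j ↦ M (N j)) i := by
    induction i with
    | zero => rfl
    | succ i ih => exact funext fun y ↦ by rw [level_succ, ← ih]
  have hN (i : ℕ) : Measurable (N i) := by
    induction i using Nat.strong_induction_on with
    | h i ih => exact hlevel i ▸ measurable_level fun j hj ↦ hMm _ (ih j hj)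
  exact ⟨fun i ↦ M (N i), fun i ↦ hMm _ (hN i), fun i ↦ by simpa only [← hlevel] using hM _ (hN i)⟩

end Resampling

section Chain

variable {V C : Type*} [AddCommGroup V] {T : Finset V} {S : ℕ → Set V} {φ : V → ℕ → C}
  {L k l i j : ℕ} {x y : V}

/-- `Chain T S L k i x`: some sequence of `k` steps, each going back in time between resampled
translates that meet, leads from the translate of `T` by the origin at time `L` to the one by `x`
at time `i`. -/
inductive Chain (T : Finset V) (S : ℕ → Set V) (L : ℕ) : ℕ → ℕ → V → Prop
  | root : Chain T S L 0 L 0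
  | step {k i j : ℕ} {x y : V} (hx : Chain T S L k i x) (hji : j < i) (hy : y ∈ S j)
      (hxy : Overlap T x y) : Chain T S L (k + 1) j y

/-- The longest chain leading to the translate of `T` by `x` at time `i` has `k` steps. -/
def HasDepth (T : Finset V) (S : ℕ → Set V) (L k i : ℕ) (x : V) : Prop :=
  IsGreatest {k | Chain T S L k i x} k

/-- The points whose translate of `T` is resampled with depth `k`. -/
def layer (T : Finset V) (S : ℕ → Set V) (L k : ℕ) : Set V :=
  {x | ∃ i, HasDepth T S L k i x}

namespace Chain

lemma add_le (h : Chain T S L k i x) : k + i ≤ L := by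
  induction h <;> lia

lemma eq_or_mem (h : Chain T S L k i x) : i = L ∧ x = 0 ∨ i < L ∧ x ∈ S i := by
  cases h with
  | root => exact .inl ⟨rfl, rfl⟩
  | step hx hji hy => exact .inr ⟨hji.trans_le (le_of_add_le_right hx.add_le), hy⟩

lemma eq_of_overlap (hS : ∀ i, IsPacking T (S i)) (hx : Chain T S L k i x)
    (hy : Chain T S L l i y) (hxy : Overlap T x y) : x = y := by
  rcases hx.eq_or_mem with ⟨hi, rfl⟩ | ⟨hi, hx⟩ <;> rcases hy.eq_or_mem with ⟨hi', rfl⟩ | ⟨hi', hy⟩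
  · rfl
  · exact absurd hi hi'.ne
  · exact absurd hi' hi.ne
  · exact hS i x hx y hy hxy

lemma exists_hasDepth (h : Chain T S L k i x) : ∃ d, HasDepth T S L d i x :=
  BddAbove.exists_isGreatest_of_nonempty ⟨L, fun _ hl ↦ le_of_add_le_left hl.add_le⟩ ⟨k, h⟩

lemma mem_deficient (h : Chain T S L k i x) (hS : IsResampling T φ S)
    (h0 : 0 ∈ deficient T fun y ↦ φ y (level T S L y)) :
    x ∈ deficient T fun y ↦ φ y (level T S i y) := by
  obtain ⟨rfl, rfl⟩ | ⟨-, hx⟩ := h.eq_or_mem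
  · exact h0
  · exact (hS i).subset hx

end Chain

namespace HasDepth

lemma chain (h : HasDepth T S L k i x) : Chain T S L k i x := h.1

lemma lt_of_lt (hx : HasDepth T S L k i x) (hy : HasDepth T S L l j y) (hxy : Overlap T x y)
    (hji : j < i) : k < l := by
  obtain ⟨rfl, -⟩ | ⟨-, hyS⟩ := hy.chain.eq_or_mem
  · exact absurd hx.chain.add_le (by lia)
  · exact hy.2 (hx.chain.step hji hyS hxy)

lemma eq_of_overlap (hS : ∀ i, IsPacking T (S i)) (hx : HasDepth T S L k i x)
    (hy : HasDepth T S L l i y) (hxy : Overlap T x y) : k = l := by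
  obtain rfl := hx.chain.eq_of_overlap hS hy.chain hxy
  exact hx.unique hy

lemma lt_iff_lt (hS : ∀ i, IsPacking T (S i)) (hx : HasDepth T S L k i x)
    (hy : HasDepth T S L l j y) (hxy : Overlap T x y) : k < l ↔ j < i := by
  refine ⟨fun hkl ↦ ?_, hx.lt_of_lt hy hxy⟩
  by_contra! hij
  obtain rfl | hij := hij.eq_or_lt
  · exact hkl.ne (hx.eq_of_overlap hS hy hxy)
  · exact hkl.asymm (hy.lt_of_lt hx hxy.symm hij)

lemma eq_iff_eq (hS : ∀ i, IsPacking T (S i)) (hx : HasDepth T S L k i x)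
    (hy : HasDepth T S L l j y) (hxy : Overlap T x y) : k = l ↔ i = j := by
  have h₁ := hx.lt_iff_lt hS hy hxy
  have h₂ := hy.lt_iff_lt hS hx hxy.symm
  lia

lemma exists_pred (hy : HasDepth T S L (k + 1) j y) :
    ∃ i x, HasDepth T S L k i x ∧ Overlap T x y := by
  obtain _ | ⟨hx, hji, -, hxy⟩ := hy.chain
  obtain ⟨d, hd⟩ := hx.exists_hasDepth
  have hdk : d = k := le_antisymm (Nat.lt_succ_iff.1 (hd.lt_of_lt hy hxy hji)) (hd.2 hx)
  exact ⟨_, _, hdk ▸ hd, hxy⟩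

end HasDepth

lemma layer_zero : layer T S L 0 = {0} := by
  ext x
  constructor
  · rintro ⟨i, hx, -⟩
    obtain ⟨⟩ := hx
    rfl
  · rintro rfl
    exact ⟨L, .root, fun k hk ↦ by simpa using hk.add_le⟩

lemma isPacking_layer (hS : ∀ i, IsPacking T (S i)) : IsPacking T (layer T S L k) := by
  rintro x ⟨i, hx⟩ y ⟨j, hy⟩ hxy
  obtain rfl := (hx.eq_iff_eq hS hy hxy).1 rfl
  exact hx.chain.eq_of_overlap hS hy.chain hxy

lemma exists_overlap_of_mem_layer_succ (hy : y ∈ layer T S L (k + 1)) :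
    ∃ x ∈ layer T S L k, Overlap T x y := by
  obtain ⟨j, hy⟩ := hy
  obtain ⟨i, x, hx, hxy⟩ := hy.exists_pred
  exact ⟨x, ⟨i, hx⟩, hxy⟩

lemma finite_layer : (layer T S L k).Finite := by
  classical
  induction k with
  | zero =>
    rw [layer_zero]
    exact finite_singleton 0
  | succ k ih =>
    refine (ih.add (T - T).finite_toSet).subset fun y hy ↦ ?_
    exact mem_add_sub_iff_exists_overlap.2 (exists_overlap_of_mem_layer_succ hy)

lemma layer_nonempty (hS : IsResampling T φ S)
    (h0 : 0 ∈ deficient T fun y ↦ φ y (level T S L y)) (hk : k ≤ L) :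
    (layer T S L k).Nonempty := by
  have hchain : ∃ x, Chain T S L k (L - k) x := by
    induction k with
    | zero => exact ⟨0, .root⟩
    | succ k ih =>
      obtain ⟨x, hx⟩ := ih (by lia)
      have hk' : L - k = L - (k + 1) + 1 := by lia
      obtain ⟨y, hy, hxy⟩ :=
        hS.exists_overlap_of_mem_deficient_succ (hk' ▸ hx.mem_deficient hS h0)
      exact ⟨y, hx.step (by lia) hy hxy⟩
  obtain ⟨x, hx⟩ := hchain
  obtain ⟨d, hd⟩ := hx.exists_hasDepth
  have hdk : d = k := le_antisymm (by have := hd.chain.add_le; lia) (hd.2 hx)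
  exact ⟨x, L - k, hdk ▸ hd⟩

end Chain

section Witness

variable {V C : Type*} [AddCommGroup V] {T : Finset V} {S : ℕ → Set V} {φ : V → ℕ → C} {L : ℕ}
  {J : Fin (L + 1) → Finset V}

/-- The witnesses of a translate missing a color after `L` rounds of resampling: `J k` stands for
the resampled translates of depth `k` below the one by the origin. -/
structure IsWitness (T : Finset V) (J : Fin (L + 1) → Finset V) : Prop where
  zero : J 0 = {0}
  exists_overlap : ∀ k : Fin L, ∀ y ∈ J k.succ, ∃ x ∈ J k.castSucc, Overlap T x y
  isPacking : ∀ k, IsPacking T (J k : Set V)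
  nonempty : ∀ k, (J k).Nonempty

open Classical in
/-- The level of `y` just before the translates of depth `k` in the witness `J` are resampled, as
computed from `J` alone: the translates covering `y` were resampled in decreasing order of depth. -/
noncomputable def pending (T : Finset V) (J : Fin (L + 1) → Finset V) (k : Fin (L + 1)) (y : V) :
    ℕ :=
  #{k' | k < k' ∧ y ∈ (J k' : Set V) + (T : Set V)}

/-- The color sequences `φ` let every translate of the witness `J` miss a color when it is due to be
resampled. -/
def Realizes (T : Finset V) (φ : V → ℕ → C) (J : Fin (L + 1) → Finset V) : Prop :=
  ∀ k, ∀ g ∈ J k, g ∈ deficient T fun y ↦ φ y (pending T J k y)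

lemma pending_le (k : Fin (L + 1)) (y : V) : pending T J k y ≤ L := by
  classical
  refine (Finset.card_le_card (t := Finset.Ioi k) fun k' hk' ↦ ?_).trans ?_
  · exact Finset.mem_Ioi.2 (Finset.mem_filter.1 hk').2.1
  · rw [Fin.card_Ioi]
    lia

lemma pending_lt_pending {k k' : Fin (L + 1)} (hk : k < k') {y : V}
    (hy : y ∈ (J k' : Set V) + (T : Set V)) : pending T J k' y < pending T J k y := by
  classical
  refine Finset.card_lt_card ((Finset.ssubset_iff_of_subset ?_).2 ⟨k', ?_, ?_⟩)
  · exact Finset.monotone_filter_right _ fun l _ hl ↦ ⟨hk.trans hl.1, hl.2⟩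
  · exact Finset.mem_filter.2 ⟨Finset.mem_univ _, hk, hy⟩
  · exact fun h ↦ (Finset.mem_filter.1 h).2.1.false

lemma pending_eq_level (hS : ∀ i, IsPacking T (S i)) (hJ : ∀ k, (J k : Set V) = layer T S L k)
    {k : Fin (L + 1)} {i : ℕ} {g t : V} (hg : HasDepth T S L k i g) (ht : t ∈ T) :
    pending T J k (g + t) = level T S i (g + t) := by
  classical
  let resampled (k' : Fin (L + 1)) (j : ℕ) : Prop :=
    ∃ x, HasDepth T S L k' j x ∧ ∃ s ∈ T, x + s = g + t
  have hlt {k' : Fin (L + 1)} {j : ℕ} : resampled k' j → (k < k' ↔ j < i) := by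
    rintro ⟨x, hx, s, hs, hxs⟩
    exact hg.lt_iff_lt hS hx ⟨t, ht, s, hs, hxs.symm⟩
  have hunique {k₁ k₂ : Fin (L + 1)} {j₁ j₂ : ℕ} :
      resampled k₁ j₁ → resampled k₂ j₂ → (k₁ = k₂ ↔ j₁ = j₂) := by
    rintro ⟨x, hx, s, hs, hxs⟩ ⟨y, hy, r, hr, hyr⟩
    rw [← hx.eq_iff_eq hS hy ⟨s, hs, r, hr, hxs.trans hyr.symm⟩, Fin.val_inj]
  rw [pending, level, Nat.count_eq_card_filter_range]
  refine le_antisymm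
    (Finset.card_le_card_of_forall_subsingleton resampled (fun k' hk' ↦ ?_) fun j _ ↦ ?_)
    (Finset.card_le_card_of_forall_subsingleton' resampled (fun j hj ↦ ?_) fun k' _ ↦ ?_)
  · obtain ⟨hkk', x, hx, s, hs, hxs⟩ := (Finset.mem_filter.1 hk').2
    obtain ⟨j, hxj⟩ := hJ k' ▸ hx
    have hji := (hlt ⟨x, hxj, s, hs, hxs⟩).1 hkk'
    obtain ⟨rfl, -⟩ | ⟨-, hxS⟩ := hxj.chain.eq_or_mem
    · exact absurd hg.chain.add_le (by lia)
    · exact ⟨j, Finset.mem_filter.2 ⟨Finset.mem_range.2 hji, x, hxS, s, hs, hxs⟩,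
        x, hxj, s, hs, hxs⟩
  · exact fun k₁ h₁ k₂ h₂ ↦ (hunique h₁.2 h₂.2).2 rfl
  · obtain ⟨hji, x, hx, s, hs, hxs⟩ := Finset.mem_filter.1 hj
    have hchain := hg.chain.step (Finset.mem_range.1 hji) hx ⟨t, ht, s, hs, hxs.symm⟩
    obtain ⟨d, hd⟩ := hchain.exists_hasDepth
    have hdL : d < L + 1 := Nat.lt_succ_of_le (le_of_add_le_left hd.chain.add_le)
    have hres : resampled ⟨d, hdL⟩ j := ⟨x, hd, s, hs, hxs⟩
    refine ⟨⟨d, hdL⟩, Finset.mem_filter.2 ⟨Finset.mem_univ _, ?_, ?_⟩, hres⟩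
    · exact (hlt hres).2 (Finset.mem_range.1 hji)
    · exact ⟨x, (hJ _).symm ▸ ⟨j, hd⟩, s, hs, hxs⟩
  · exact fun j₁ h₁ j₂ h₂ ↦ (hunique h₁.2 h₂.2).1 rfl

lemma IsResampling.exists_isWitness (hS : IsResampling T φ S)
    (h0 : 0 ∈ deficient T fun y ↦ φ y (level T S L y)) :
    ∃ J : Fin (L + 1) → Finset V, IsWitness T J ∧ Realizes T φ J := by
  have hpack (i : ℕ) : IsPacking T (S i) := (hS i).isPacking
  let J (k : Fin (L + 1)) : Finset V := (finite_layer (T := T) (S := S) (L := L) (k := k)).toFinset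
  have hJ (k : Fin (L + 1)) : (J k : Set V) = layer T S L k := Finite.coe_toFinset _
  refine ⟨J, ⟨?_, fun k y hy ↦ ?_, fun k ↦ ?_, fun k ↦ ?_⟩, fun k g hg ↦ ?_⟩
  · exact Finset.coe_injective ((hJ 0).trans (by simpa using layer_zero))
  · simp only [← Finset.mem_coe, hJ] at hy ⊢
    exact exists_overlap_of_mem_layer_succ hy
  · exact hJ k ▸ isPacking_layer hpack
  · exact Finset.coe_nonempty.1 (hJ k ▸ layer_nonempty hS h0 (Fin.is_le k))
  · rw [← Finset.mem_coe, hJ] at hg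
    obtain ⟨i, hi⟩ := hg
    exact (deficient_congr fun t ht ↦ by rw [pending_eq_level hpack hJ hi ht]).1
      (hi.chain.mem_deficient hS h0)

lemma IsWitness.succ_subset [DecidableEq V] (hJ : IsWitness T J) (k : Fin L) :
    J k.succ ⊆ J k.castSucc + (T - T) := fun y hy ↦ by
  rw [← Finset.mem_coe, Finset.coe_add]
  exact mem_add_sub_iff_exists_overlap.2 (hJ.exists_overlap k y hy)

lemma IsWitness.subset_nsmul [DecidableEq V] (hJ : IsWitness T J) (k : Fin (L + 1)) :
    J k ⊆ (k : ℕ) • (T - T) := by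
  induction k using Fin.induction with
  | zero => exact hJ.zero.le
  | succ k ih =>
    rw [Fin.val_succ, succ_nsmul]
    exact (hJ.succ_subset k).trans (Finset.add_subset_add_right ih)

end Witness

section Counting

variable {V : Type*}

lemma sum_pow_card_eq_mul_sum_tail [DecidableEq V] {L : ℕ} {A : Finset V}
    {𝓙 : Finset (Fin (L + 1) → Finset V)} (q : ℝ) (hzero : ∀ J ∈ 𝓙, J 0 = A) :
    ∑ J ∈ 𝓙, q ^ ∑ k, #(J k) = q ^ #A * ∑ J ∈ 𝓙.image Fin.tail, q ^ ∑ k, #(J k) := by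
  have hinj : InjOn Fin.tail (𝓙 : Set (Fin (L + 1) → Finset V)) := fun J hJ J' hJ' h ↦ by
    rw [← Fin.cons_self_tail J, ← Fin.cons_self_tail J', h, hzero J hJ, hzero J' hJ']
  rw [Finset.sum_image hinj, Finset.mul_sum]
  refine Finset.sum_congr rfl fun J hJ ↦ ?_
  rw [Fin.sum_univ_succ, pow_add, hzero J hJ]
  rfl

lemma sum_pow_card_le [Add V] [DecidableEq V] {D : Finset V} {q w : ℝ} (hq : 0 ≤ q) (hw : 0 ≤ w)
    (hqw : q * (1 + w) ^ #D ≤ w) {L : ℕ} {A : Finset V} {𝓙 : Finset (Fin (L + 1) → Finset V)}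
    (hzero : ∀ J ∈ 𝓙, J 0 = A) (hsucc : ∀ J ∈ 𝓙, ∀ k : Fin L, J k.succ ⊆ J k.castSucc + D) :
    ∑ J ∈ 𝓙, q ^ ∑ k, #(J k) ≤ w ^ #A := by
  induction L generalizing A with
  | zero =>
    have hsub : 𝓙 ⊆ {fun _ ↦ A} := fun J hJ ↦
      Finset.mem_singleton.2 (funext fun k ↦ by rw [Fin.fin_one_eq_zero k, hzero J hJ])
    calc ∑ J ∈ 𝓙, q ^ ∑ k, #(J k) ≤ q ^ #A := by
          simpa using Finset.sum_le_sum_of_subset_of_nonneg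
            (f := fun J : Fin 1 → Finset V ↦ q ^ ∑ k, #(J k)) hsub fun _ _ _ ↦ by positivity
      _ ≤ w ^ #A := by
        gcongr
        exact (le_mul_of_one_le_right hq (one_le_pow₀ (by linarith))).trans hqw
  | succ L ih =>
    have hfiber (B : Finset V) :
        ∑ J ∈ 𝓙 with J 1 = B, q ^ ∑ k, #(J k) ≤ q ^ #A * w ^ #B := by
      rw [sum_pow_card_eq_mul_sum_tail q fun J hJ ↦ hzero J (Finset.mem_filter.1 hJ).1]
      gcongr
      refine ih ?_ ?_ <;> simp only [Finset.forall_mem_image, Finset.mem_filter]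
      · exact fun J hJ ↦ hJ.2
      · exact fun J hJ k ↦ hsucc J hJ.1 k.succ
    calc ∑ J ∈ 𝓙, q ^ ∑ k, #(J k)
        = ∑ B ∈ (A + D).powerset, ∑ J ∈ 𝓙 with J 1 = B, q ^ ∑ k, #(J k) :=
          (Finset.sum_fiberwise_of_maps_to (fun J hJ ↦
            Finset.mem_powerset.2 (hzero J hJ ▸ hsucc J hJ 0)) _).symm
      _ ≤ ∑ B ∈ (A + D).powerset, q ^ #A * w ^ #B := Finset.sum_le_sum fun B _ ↦ hfiber B
      _ = q ^ #A * (1 + w) ^ #(A + D) := by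
        rw [← Finset.mul_sum, add_comm 1 w, ← Finset.sum_pow_mul_eq_add_pow]
        simp only [one_pow, mul_one]
      _ ≤ q ^ #A * (1 + w) ^ (#D * #A) := by
        gcongr
        · linarith
        · exact Finset.card_add_le.trans (mul_comm _ _).le
      _ = (q * (1 + w) ^ #D) ^ #A := by rw [mul_pow, pow_mul]
      _ ≤ w ^ #A := by gcongr

lemma inv_exp_one_mul_mul_one_add_pow_le {d n : ℕ} (hn : 0 < n) (hd : d ≤ n) :
    (Real.exp 1 * n)⁻¹ * (1 + 1 / (n : ℝ)) ^ d ≤ 1 / n :=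
  calc (Real.exp 1 * n)⁻¹ * (1 + 1 / (n : ℝ)) ^ d
      ≤ (Real.exp 1 * n)⁻¹ * (1 + 1 / (n : ℝ)) ^ n := by
        gcongr
        exact le_add_of_nonneg_right (by positivity)
    _ ≤ (Real.exp 1 * n)⁻¹ * Real.exp (1 / n) ^ n := by
        gcongr
        linarith [Real.add_one_le_exp (1 / (n : ℝ))]
    _ = 1 / n := by
        rw [← Real.exp_nat_mul, mul_one_div_cancel (by positivity)]
        field_simp

/- With `m = #T`, the weight `1 / (e * m ^ 2)` is subcritical, as each translate of `T` meets at
most `m ^ 2` translates; each witness has at least `L + 1` points. -/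
lemma sum_pow_card_le_of_isWitness [AddCommGroup V] {T : Finset V} (hT : T.Nonempty) {p : ℝ}
    (hp : 0 ≤ p) (hp' : p * (Real.exp 1 * #T ^ 2) ≤ 1) {L : ℕ}
    {𝓙 : Finset (Fin (L + 1) → Finset V)} (h𝓙 : ∀ J ∈ 𝓙, IsWitness T J) :
    ∑ J ∈ 𝓙, p ^ ∑ k, #(J k) ≤ (p * (Real.exp 1 * #T ^ 2)) ^ (L + 1) := by
  classical
  have hm : (1 : ℝ) ≤ #T := mod_cast hT.card_pos
  set q : ℝ := (Real.exp 1 * #T ^ 2)⁻¹ with hq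
  set w : ℝ := 1 / #T ^ 2 with hw
  have hqw : q * (1 + w) ^ #(T - T) ≤ w := by
    have h := inv_exp_one_mul_mul_one_add_pow_le (pow_pos hT.card_pos 2)
      (Finset.card_sub_le.trans (sq #T).ge)
    rwa [Nat.cast_pow] at h
  have hsum : ∑ J ∈ 𝓙, q ^ ∑ k, #(J k) ≤ 1 :=
    calc ∑ J ∈ 𝓙, q ^ ∑ k, #(J k) ≤ w ^ #({0} : Finset V) :=
          sum_pow_card_le (by positivity) (by positivity) hqw (fun J hJ ↦ (h𝓙 J hJ).zero)
            fun J hJ ↦ (h𝓙 J hJ).succ_subset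
      _ ≤ 1 := by
          rw [Finset.card_singleton, pow_one, hw]
          exact div_le_one_of_le₀ (one_le_pow₀ hm) (by positivity)
  have hcard (J) (hJ : J ∈ 𝓙) : L + 1 ≤ ∑ k, #(J k) := by
    simpa using Finset.card_nsmul_le_sum Finset.univ (fun k ↦ #(J k)) 1
      fun k _ ↦ ((h𝓙 J hJ).nonempty k).card_pos
  calc ∑ J ∈ 𝓙, p ^ ∑ k, #(J k)
      = ∑ J ∈ 𝓙, (p * (Real.exp 1 * #T ^ 2)) ^ (∑ k, #(J k)) * q ^ ∑ k, #(J k) := by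
        have hne : Real.exp 1 * (#T : ℝ) ^ 2 ≠ 0 := by positivity
        simp only [← mul_pow, hq, mul_inv_cancel_right₀ hne]
    _ ≤ ∑ J ∈ 𝓙, (p * (Real.exp 1 * #T ^ 2)) ^ (L + 1) * q ^ ∑ k, #(J k) :=
        Finset.sum_le_sum fun J hJ ↦ by
          gcongr ?_ * _
          exact pow_le_pow_of_le_one (by positivity) hp' (hcard J hJ)
    _ ≤ (p * (Real.exp 1 * #T ^ 2)) ^ (L + 1) := by
        rw [← Finset.mul_sum]
        exact mul_le_of_le_one_right (by positivity) hsum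

lemma one_sub_one_div_cast_nonneg (n : ℕ) : (0 : ℝ) ≤ 1 - 1 / n :=
  sub_nonneg.2 (one_div (n : ℝ) ▸ Nat.cast_inv_le_one n)

variable {I P Q C : Type*} [Fintype I] [DecidableEq I] [Fintype C] [DecidableEq C]

lemma card_filter_forall_ne {s : Finset P} {idx : P → I} (hidx : InjOn idx s) (col : P → C) :
    (#{R : I → C | ∀ p ∈ s, R (idx p) ≠ col p} : ℝ) =
      Fintype.card C ^ Fintype.card I * (1 - 1 / Fintype.card C) ^ #s := by
  let allowed (i : I) : Finset C := {a | ∀ p ∈ s, idx p = i → a ≠ col p}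
  have hpi : ({R : I → C | ∀ p ∈ s, R (idx p) ≠ col p} : Finset (I → C)) =
      Fintype.piFinset allowed := by
    ext R
    simp only [allowed, Finset.mem_filter_univ, Fintype.mem_piFinset]
    grind
  have hallowed (i : I) : (#(allowed i) : ℝ) =
      Fintype.card C * if i ∈ s.image idx then 1 - 1 / (Fintype.card C : ℝ) else 1 := by
    split_ifs with hi
    · obtain ⟨p, hp, rfl⟩ := Finset.mem_image.1 hi
      have hcol : allowed (idx p) = {col p}ᶜ := by
        ext a
        simp only [allowed, Finset.mem_filter_univ, Finset.mem_compl, Finset.mem_singleton]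
        exact ⟨fun h ↦ h p hp rfl, fun h p' hp' hpp' ↦ hidx hp' hp hpp' ▸ h⟩
      have hpos : 0 < Fintype.card C := Fintype.card_pos_iff.2 ⟨col p⟩
      rw [hcol, Finset.card_compl, Finset.card_singleton, Nat.cast_pred hpos]
      field_simp
    · have huniv : allowed i = Finset.univ := Finset.filter_true_of_mem fun a _ p hp hpi ↦
        (hi (Finset.mem_image.2 ⟨p, hp, hpi⟩)).elim
      rw [huniv, Finset.card_univ, mul_one]
  rw [hpi, Fintype.card_piFinset, Nat.cast_prod]
  simp only [hallowed, Finset.prod_mul_distrib, Finset.prod_const, Finset.prod_ite_mem,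
    Finset.univ_inter, Finset.card_univ, Finset.card_image_of_injOn hidx]

lemma card_filter_forall_exists_ne_le {s : Finset P} {T : Finset Q} {idx : P → Q → I}
    (hidx : InjOn (Function.uncurry idx) ((s : Set P) ×ˢ (T : Set Q))) :
    (#{R : I → C | ∀ p ∈ s, ∃ col, ∀ t ∈ T, R (idx p t) ≠ col} : ℝ) ≤
      Fintype.card C ^ Fintype.card I *
        (Fintype.card C * (1 - 1 / Fintype.card C) ^ #T) ^ #s := by
  classical
  let missing (f : s → C) : Finset (I → C) :=
    {R | ∀ p ∈ (Finset.univ : Finset s) ×ˢ T, R (idx p.1 p.2) ≠ f p.1}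
  have hcover : ({R | ∀ p ∈ s, ∃ col, ∀ t ∈ T, R (idx p t) ≠ col} : Finset (I → C)) ⊆
      Finset.univ.biUnion missing := fun R hR ↦ by
    choose f hf using fun p : s ↦ (Finset.mem_filter_univ _).1 hR p p.2
    refine Finset.mem_biUnion.2 ⟨f, Finset.mem_univ _, (Finset.mem_filter_univ _).2 ?_⟩
    exact fun p hp ↦ hf p.1 p.2 (Finset.mem_product.1 hp).2
  have hmissing (f : s → C) : (#(missing f) : ℝ) =
      Fintype.card C ^ Fintype.card I * (1 - 1 / Fintype.card C) ^ (#T * #s) := by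
    refine (card_filter_forall_ne ?_ _).trans ?_
    · rintro ⟨p, t⟩ hpt ⟨p', t'⟩ hpt' h
      have hmem {p : s} {t : Q} (h : (p, t) ∈ ((Finset.univ ×ˢ T : Finset (s × Q)) : Set (s × Q))) :
          ((p : P), t) ∈ (s : Set P) ×ˢ (T : Set Q) := ⟨p.2, (Finset.mem_product.1 h).2⟩
      obtain ⟨hpp', htt'⟩ := Prod.mk.inj (hidx (hmem hpt) (hmem hpt') h)
      rw [Subtype.ext hpp', htt']
    · rw [Finset.card_product, Finset.card_univ, Fintype.card_coe, mul_comm #T]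
  calc (#{R : I → C | ∀ p ∈ s, ∃ col, ∀ t ∈ T, R (idx p t) ≠ col} : ℝ)
      ≤ ∑ f : s → C, (#(missing f) : ℝ) :=
        mod_cast (Finset.card_le_card hcover).trans Finset.card_biUnion_le
    _ = Fintype.card C ^ Fintype.card I *
        (Fintype.card C * (1 - 1 / Fintype.card C) ^ #T) ^ #s := by
      simp only [hmissing, Finset.sum_const, Finset.card_univ, Fintype.card_fun, Fintype.card_coe,
        nsmul_eq_mul, Nat.cast_pow, mul_pow, pow_mul]
      ring

end Counting

section Table

variable {V κ C : Type*} {L : ℕ} {c : V → κ}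

/-- The color sequences read off a finite table: the `n`-th color of `y` depends only on `n` and on
the label `c y`. Only the values at `n ≤ L` are meaningful. -/
def tableColors (c : V → κ) (R : κ × Fin (L + 1) → C) (y : V) (n : ℕ) : C :=
  R (c y, Fin.ofNat (L + 1) n)

lemma measurable_tableColors [MeasurableSpace V] [Finite κ] [MeasurableSpace κ]
    [MeasurableSingletonClass κ] [MeasurableSpace C] (hc : Measurable c)
    (R : κ × Fin (L + 1) → C) : Measurable fun p : V × ℕ ↦ tableColors c R p.1 p.2 :=
  (measurable_of_finite R).comp
    ((hc.comp measurable_fst).prodMk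
      ((measurable_from_nat (f := Fin.ofNat (L + 1))).comp measurable_snd))

variable [AddCommGroup V] {T : Finset V}

lemma injOn_slot {J : Fin (L + 1) → Finset V} (hJ : ∀ k, IsPacking T (J k : Set V)) {x : V}
    (hc : InjOn (fun y ↦ c (x + y)) (⋃ k, (J k : Set V) + (T : Set V))) :
    InjOn (Function.uncurry fun (p : Σ _ : Fin (L + 1), V) t ↦
        (c (x + (p.2 + t)), Fin.ofNat (L + 1) (pending T J p.1 (p.2 + t))))
      ((Finset.univ.sigma J : Finset (Σ _, V)) ×ˢ (T : Set V)) := by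
  rintro ⟨⟨k, g⟩, t⟩ ⟨hg, ht⟩ ⟨⟨k', g'⟩, t'⟩ ⟨hg', ht'⟩ h
  simp only [Finset.mem_coe, Finset.mem_sigma, Finset.mem_univ, true_and] at hg hg' ht ht'
  obtain ⟨hlabel, hslot⟩ := Prod.mk.inj h
  have hmem : g + t ∈ (J k : Set V) + (T : Set V) := add_mem_add hg ht
  have hmem' : g' + t' ∈ (J k' : Set V) + (T : Set V) := add_mem_add hg' ht'
  have hpoint : g + t = g' + t' :=
    hc (mem_iUnion_of_mem k hmem) (mem_iUnion_of_mem k' hmem') hlabel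
  rw [← hpoint] at hmem' hslot
  have hpending : pending T J k (g + t) = pending T J k' (g + t) := by
    simpa [Nat.mod_eq_of_lt (Nat.lt_succ_of_le (pending_le _ _))] using congrArg Fin.val hslot
  obtain rfl : k = k' := by
    rcases lt_trichotomy k k' with hk | hk | hk
    · exact absurd hpending (pending_lt_pending hk hmem').ne'
    · exact hk
    · exact absurd hpending (pending_lt_pending hk hmem).ne
  obtain rfl : g = g' := hJ k g hg g' hg' ⟨t, ht, t', ht', hpoint⟩
  rw [add_left_cancel hpoint]

lemma Realizes.congr {φ ψ : V → ℕ → C} {J : Fin (L + 1) → Finset V} (h : Realizes T φ J)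
    (hφ : ∀ k, ∀ y ∈ (J k : Set V) + (T : Set V), φ y = ψ y) : Realizes T ψ J := fun k g hg ↦
  (deficient_congr fun t ht ↦ by rw [hφ k _ (add_mem_add hg ht)]).1 (h k g hg)

open Classical in
lemma card_filter_realizes_le [Fintype κ] [Fintype C] {J : Fin (L + 1) → Finset V}
    (hJ : ∀ k, IsPacking T (J k : Set V)) {x : V}
    (hc : InjOn (fun y ↦ c (x + y)) (⋃ k, (J k : Set V) + (T : Set V))) :
    (#{R : κ × Fin (L + 1) → C | Realizes T (fun y ↦ tableColors c R (x + y)) J} : ℝ) ≤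
      Fintype.card C ^ Fintype.card (κ × Fin (L + 1)) *
        (Fintype.card C * (1 - 1 / Fintype.card C) ^ #T) ^ ∑ k, #(J k) := by
  rw [← Finset.card_sigma]
  refine le_trans (Nat.cast_le.2 (Finset.card_le_card ?_))
    (card_filter_forall_exists_ne_le (injOn_slot hJ hc))
  intro R hR
  refine (Finset.mem_filter_univ _).2 fun p hp ↦ ?_
  exact (Finset.mem_filter_univ _).1 hR p.1 p.2 (Finset.mem_sigma.1 hp).2

variable [Fintype C] [Nonempty C] [Finite κ]

lemma exists_table_forall_mem_not_realizes (hT : T.Nonempty) {X : Finset V}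
    {𝓙 : Finset (Fin (L + 1) → Finset V)} (h𝓙 : ∀ J ∈ 𝓙, IsWitness T J)
    (hc : ∀ x ∈ X, ∀ J ∈ 𝓙, InjOn (fun y ↦ c (x + y)) (⋃ k, (J k : Set V) + (T : Set V)))
    (hr : Fintype.card C * (1 - 1 / Fintype.card C : ℝ) ^ #T * (Real.exp 1 * #T ^ 2) ≤ 1)
    (hlt : #X * (Fintype.card C * (1 - 1 / Fintype.card C : ℝ) ^ #T *
      (Real.exp 1 * #T ^ 2)) ^ (L + 1) < 1) :
    ∃ R : κ × Fin (L + 1) → C, ∀ x ∈ X, ∀ J ∈ 𝓙,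
      ¬ Realizes T (fun y ↦ tableColors c R (x + y)) J := by
  classical
  have := Fintype.ofFinite κ
  by_contra! hcon
  set p : ℝ := Fintype.card C * (1 - 1 / Fintype.card C) ^ #T
  set N : ℝ := Fintype.card C ^ Fintype.card (κ × Fin (L + 1))
  have hN : 0 < N := by positivity
  have hp : 0 ≤ p := mul_nonneg (Nat.cast_nonneg _) (pow_nonneg (one_sub_one_div_cast_nonneg _) _)
  let bad (x : V) (J : Fin (L + 1) → Finset V) : Finset (κ × Fin (L + 1) → C) :=
    {R | Realizes T (fun y ↦ tableColors c R (x + y)) J}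
  have hcover : Finset.univ ⊆ X.biUnion fun x ↦ 𝓙.biUnion (bad x) := fun R _ ↦ by
    obtain ⟨x, hx, J, hJ, hR⟩ := hcon R
    exact Finset.mem_biUnion.2
      ⟨x, hx, Finset.mem_biUnion.2 ⟨J, hJ, (Finset.mem_filter_univ _).2 hR⟩⟩
  have hle : N ≤ N * (#X * (p * (Real.exp 1 * #T ^ 2)) ^ (L + 1)) :=
    calc N = #(Finset.univ : Finset (κ × Fin (L + 1) → C)) := by
          rw [Finset.card_univ, Fintype.card_fun, Nat.cast_pow]
      _ ≤ ∑ x ∈ X, ∑ J ∈ 𝓙, (#(bad x J) : ℝ) := mod_cast (Finset.card_le_card hcover).trans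
          (Finset.card_biUnion_le.trans (Finset.sum_le_sum fun _ _ ↦ Finset.card_biUnion_le))
      _ ≤ ∑ _x ∈ X, ∑ J ∈ 𝓙, N * p ^ ∑ k, #(J k) :=
          Finset.sum_le_sum fun x hx ↦ Finset.sum_le_sum fun J hJ ↦
            card_filter_realizes_le (h𝓙 J hJ).isPacking (hc x hx J hJ)
      _ = N * (#X * ∑ J ∈ 𝓙, p ^ ∑ k, #(J k)) := by
          rw [← Finset.mul_sum, Finset.sum_const, nsmul_eq_mul, mul_left_comm]
      _ ≤ N * (#X * (p * (Real.exp 1 * #T ^ 2)) ^ (L + 1)) := by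
          gcongr
          exact sum_pow_card_le_of_isWitness hT hp hr h𝓙
  exact absurd hle (mul_lt_of_lt_one_right hN hlt).not_ge

lemma exists_table_forall_not_realizes [DecidableEq V] (hT : T.Nonempty) {X : Finset V}
    (hX : ∀ x, ∃ x' ∈ X, ∀ g ∈ L • (T - T) + T, c (x + g) = c (x' + g))
    (hc : ∀ x, InjOn (fun y ↦ c (x + y)) (L • (T - T) + T : Finset V))
    (hr : Fintype.card C * (1 - 1 / Fintype.card C : ℝ) ^ #T * (Real.exp 1 * #T ^ 2) ≤ 1)
    (hlt : #X * (Fintype.card C * (1 - 1 / Fintype.card C : ℝ) ^ #T *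
      (Real.exp 1 * #T ^ 2)) ^ (L + 1) < 1) :
    ∃ R : κ × Fin (L + 1) → C, ∀ x, ∀ J : Fin (L + 1) → Finset V, IsWitness T J →
      ¬ Realizes T (fun y ↦ tableColors c R (x + y)) J := by
  classical
  have hsub {J : Fin (L + 1) → Finset V} (hJ : IsWitness T J) (k : Fin (L + 1)) :
      J k ⊆ L • (T - T) := (hJ.subset_nsmul k).trans
    (Finset.nsmul_subset_nsmul_right (hT.zero_mem_sub) (Fin.is_le k))
  have hsub' {J : Fin (L + 1) → Finset V} (hJ : IsWitness T J) (k : Fin (L + 1)) :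
      (J k : Set V) + (T : Set V) ⊆ (L • (T - T) + T : Finset V) := by
    rw [← Finset.coe_add, Finset.coe_subset]
    exact Finset.add_subset_add_right (hsub hJ k)
  let 𝓙 : Finset (Fin (L + 1) → Finset V) :=
    {J ∈ Fintype.piFinset fun _ ↦ (L • (T - T)).powerset | IsWitness T J}
  obtain ⟨R, hR⟩ := exists_table_forall_mem_not_realizes (C := C) (κ := κ) (𝓙 := 𝓙) hT
    (fun J hJ ↦ (Finset.mem_filter.1 hJ).2) (fun x _ J hJ ↦ (hc x).mono
      (iUnion_subset (hsub' (Finset.mem_filter.1 hJ).2))) hr hlt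
  refine ⟨R, fun x J hJ hRJ ↦ ?_⟩
  obtain ⟨x', hx', hxx'⟩ := hX x
  have hJ𝓙 : J ∈ 𝓙 := Finset.mem_filter.2
    ⟨Fintype.mem_piFinset.2 fun k ↦ Finset.mem_powerset.2 (hsub hJ k), hJ⟩
  refine hR x' hx' J hJ𝓙 (hRJ.congr fun k y hy ↦ funext fun n ↦ ?_)
  rw [tableColors, tableColors, hxx' y (Finset.mem_coe.1 (hsub' hJ k hy))]

end Table

section Growth

variable {V : Type*} [DecidableEq V]

lemma card_nsmul_le [AddCommMonoid V] (A : Finset V) (k : ℕ) : #(k • A) ≤ (k + 1) ^ #A := by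
  have hmult : ∀ x ∈ k • A, ∃ n : A → ℕ, (∀ a, n a ≤ k) ∧ ∑ a, n a • (a : V) = x := by
    induction k with
    | zero => exact fun x hx ↦ ⟨0, fun _ ↦ le_rfl, by simpa [eq_comm] using hx⟩
    | succ k ih =>
      intro x hx
      rw [succ_nsmul] at hx
      obtain ⟨y, hy, a, ha, rfl⟩ := Finset.mem_add.1 hx
      obtain ⟨n, hn, rfl⟩ := ih y hy
      refine ⟨n + Pi.single ⟨a, ha⟩ 1, fun a' ↦ add_le_add (hn a') ?_, ?_⟩
      · rw [Pi.single_apply]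
        split_ifs <;> simp
      · simp [add_nsmul, Finset.sum_add_distrib, Pi.single_apply, ite_smul]
  calc #(k • A) ≤ #((Fintype.piFinset fun _ : A ↦ Finset.range (k + 1)).image
        fun n : A → ℕ ↦ ∑ a, n a • (a : V)) := Finset.card_le_card fun x hx ↦ by
          obtain ⟨n, hn, hnx⟩ := hmult x hx
          exact Finset.mem_image.2 ⟨n, Fintype.mem_piFinset.2 fun a ↦
            Finset.mem_range_succ_iff.2 (hn a), hnx⟩
    _ ≤ (k + 1) ^ #A := Finset.card_image_le.trans (by simp)

lemma exists_card_nsmul_mul_pow_lt_one [AddCommMonoid V] (D B : Finset V) {r : ℝ} (hr₀ : 0 ≤ r)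
    (hr₁ : r < 1) :
    ∃ L : ℕ, (5 * #((2 * L + 1) • D) + 1) * (#(L • D + B) + 1) * r ^ (L + 1) < 1 := by
  have hlim := (tendsto_pow_const_mul_const_pow_of_abs_lt_one (2 * #D)
    (abs_lt.2 ⟨by linarith, hr₁⟩)).const_mul (6 * 2 ^ #D * (#B + 1) : ℝ)
  rw [mul_zero] at hlim
  obtain ⟨L, hL⟩ := ((hlim.comp (Filter.tendsto_add_atTop_nat 1)).eventually_lt_const
    zero_lt_one).exists
  refine ⟨L, lt_of_le_of_lt ?_ hL⟩
  have hD : (5 * #((2 * L + 1) • D) + 1 : ℝ) ≤ 6 * (2 * (L + 1)) ^ #D := by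
    have h : (#((2 * L + 1) • D) : ℝ) ≤ (2 * L + 1 + 1) ^ #D := mod_cast card_nsmul_le D (2 * L + 1)
    have h₁ : (1 : ℝ) ≤ (2 * (L + 1)) ^ #D := one_le_pow₀ (by linarith [L.cast_nonneg (α := ℝ)])
    rw [show (2 * L + 1 + 1 : ℝ) = 2 * (L + 1) by ring] at h
    linarith
  have hB : (#(L • D + B) + 1 : ℝ) ≤ (L + 1) ^ #D * (#B + 1) := by
    have h : (#(L • D + B) : ℝ) ≤ (L + 1) ^ #D * #B :=
      mod_cast Finset.card_add_le.trans (Nat.mul_le_mul_right _ (card_nsmul_le D L))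
    have h₁ : (1 : ℝ) ≤ (L + 1) ^ #D := one_le_pow₀ (by linarith [L.cast_nonneg (α := ℝ)])
    linarith
  calc (5 * #((2 * L + 1) • D) + 1) * (#(L • D + B) + 1) * r ^ (L + 1)
      ≤ 6 * (2 * (L + 1)) ^ #D * ((L + 1) ^ #D * (#B + 1)) * r ^ (L + 1) := by gcongr
    _ = 6 * 2 ^ #D * (#B + 1) * (((L + 1 : ℕ) : ℝ) ^ (2 * #D) * r ^ (L + 1)) := by
      rw [mul_pow 2, two_mul #D, pow_add]
      push_cast
      ring

lemma nsmul_sub_add_sub_self [AddCommGroup V] (T : Finset V) (L : ℕ) :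
    (L • (T - T) + T) - (L • (T - T) + T) = (2 * L + 1) • (T - T) := by
  rw [add_sub_add_comm, ← nsmul_sub, sub_eq_add_neg (T - T), neg_sub, nsmul_add, ← add_nsmul,
    ← two_mul, succ_nsmul]

end Growth

theorem exists_measurable_forall_notMem_deficient {V κ C : Type*} [AddCommGroup V] [DecidableEq V]
    [MeasurableSpace V] [MeasurableAdd V] [Finite κ] [MeasurableSpace κ]
    [MeasurableSingletonClass κ] [Fintype C] [Nonempty C] [MeasurableSpace C]
    [MeasurableSingletonClass C] {T : Finset V} (hT : T.Nonempty) {L : ℕ} {c : V → κ}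
    (hc : Measurable c) (hsep : ∀ x, ∀ g ∈ (2 * L + 1) • (T - T), g ≠ 0 → c (x + g) ≠ c x)
    {X : Finset V} (hX : ∀ x, ∃ x' ∈ X, ∀ g ∈ L • (T - T) + T, c (x + g) = c (x' + g))
    (hr : Fintype.card C * (1 - 1 / Fintype.card C : ℝ) ^ #T * (Real.exp 1 * #T ^ 2) ≤ 1)
    (hlt : #X * (Fintype.card C * (1 - 1 / Fintype.card C : ℝ) ^ #T *
      (Real.exp 1 * #T ^ 2)) ^ (L + 1) < 1) :
    ∃ f : V → C, Measurable f ∧ ∀ x, x ∉ deficient T f := by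
  have heq {x y : V} (hxy : y - x ∈ (2 * L + 1) • (T - T)) (h : c x = c y) : x = y := by
    by_contra hne
    exact hsep x _ hxy (sub_ne_zero.2 (Ne.symm hne)) (by rw [add_sub_cancel, h])
  have hinj (x : V) : InjOn (fun y ↦ c (x + y)) (L • (T - T) + T : Finset V) :=
    fun g hg g' hg' h ↦ add_left_cancel (heq (by
      rw [add_sub_add_left_eq_sub, ← nsmul_sub_add_sub_self]
      exact Finset.sub_mem_sub hg' hg) h)
  have hlabel (x y : V) (hxy : Overlap T x y) (h : c x = c y) : x = y := by
    refine heq (Finset.nsmul_subset_nsmul_right hT.zero_mem_sub (by lia : 1 ≤ 2 * L + 1) ?_) h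
    rw [one_nsmul]
    exact overlap_iff_sub_mem.1 hxy
  obtain ⟨R, hR⟩ := exists_table_forall_not_realizes hT hX hinj hr hlt
  have hφ := measurable_tableColors hc R
  obtain ⟨S, hSm, hS⟩ := exists_isResampling hφ fun A hA ↦
    exists_measurableSet_isMaximalPacking hT hc hlabel hA
  refine ⟨fun y ↦ tableColors c R y (level T S L y),
    hφ.comp (measurable_id.prodMk (measurable_level fun j _ ↦ hSm j)), fun x hx ↦ ?_⟩
  obtain ⟨J, hJ, hRJ⟩ := (hS.preimage_const_add x).exists_isWitness (L := L) (by
    simp only [level_preimage_const_add]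
    rw [deficient_const_add fun y ↦ tableColors c R y (level T S L y), mem_preimage, add_zero]
    exact hx)
  exact hR x J hJ hRJ

end MulticoloredTranslates

open MulticoloredTranslates in
theorem borel_multicolored_translates_general {V C : Type*} [AddCommGroup V] [Module ℝ V]
    [TopologicalSpace V] [ContinuousAdd V] [SeparatingDual ℝ V] [MeasurableSpace V] [BorelSpace V]
    [Fintype C] [Nonempty C] [MeasurableSpace C] [MeasurableSingletonClass C]
    (T : Finset V) (hT : T.Nonempty)
    (hineq : (Fintype.card C : ℝ) * (1 - 1 / (Fintype.card C : ℝ)) ^ #T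
      < 1 / (Real.exp 1 * (#T : ℝ) ^ 2)) :
    ∃ f : V → C, Measurable f ∧ ∀ x : V, ∀ c : C, ∃ t ∈ T, f (x + t) = c := by
  classical
  set r : ℝ := Fintype.card C * (1 - 1 / Fintype.card C : ℝ) ^ #T * (Real.exp 1 * #T ^ 2)
  have hr₀ : 0 ≤ r := by
    have := one_sub_one_div_cast_nonneg (Fintype.card C)
    positivity
  have hr₁ : r < 1 := (lt_div_iff₀ (by have := hT.card_pos; positivity)).1 hineq
  obtain ⟨L, hL⟩ := exists_card_nsmul_mul_pow_lt_one (T - T) T hr₀ hr₁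
  obtain ⟨c, hc, hsep, X, hXcard, hX⟩ := exists_measurable_label
    (Finset.notMem_erase 0 ((2 * L + 1) • (T - T))) (L • (T - T) + T)
  obtain ⟨f, hf, hfT⟩ := exists_measurable_forall_notMem_deficient hT hc
    (fun x g hg hg₀ ↦ hsep x g (Finset.mem_erase.2 ⟨hg₀, hg⟩)) hX hr₁.le (hL.trans_le' (by
      gcongr
      refine mod_cast hXcard.trans ?_
      gcongr
      exact Finset.erase_subset _ _))
  exact ⟨f, hf, by simpa [deficient] using hfT⟩

/-- Corollary 1.2 of the paper (Erdős–Lovász).  If `T ⊆ ℝⁿ` is a finite nonempty set of vectors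
and `b ≥ 1` satisfies `b·(1 − 1/b)^|T| < 1/(e·|T|²)`, then there is a `b`-coloring
`f : ℝⁿ → {0,…,b−1}` such that `f` is Borel measurable and every translate `x + T` is multicolored. -/
theorem borel_multicolored_translates (n : ℕ) (hn : 1 ≤ n)
    (T : Finset (Fin n → ℝ)) (hT : T.Nonempty)
    (b : ℕ) (hb : 1 ≤ b)
    (hineq : (b : ℝ) * (1 - 1 / (b : ℝ)) ^ T.card
      < 1 / (Real.exp 1 * (T.card : ℝ) ^ 2)) :
    ∃ f : (Fin n → ℝ) → Fin b, Measurable f ∧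
      ∀ x : Fin n → ℝ, ∀ c : Fin b, ∃ t ∈ T, f (x + t) = c := by
  have : NeZero b := ⟨by lia⟩
  exact borel_multicolored_translates_general T hT (by simpa using hineq)
end

section
/- Let Δ ≥ 2 be an integer and set c := (Δ−1)^{Δ−1}/Δ^Δ. Define a sequence of real numbers by a_0 := c and a_{i+1} := c·(1 + a_i)^Δ for all i ∈ ℕ. Then a_i ≤ 1/(Δ−1) for every i ∈ ℕ. -/
/-!
The map `x ↦ c * (1 + x) ^ Δ` is monotone on the nonnegative reals and takes `0` to `c`, so the
sequence is its orbit of `0`, shifted by one. An orbit of a monotone map starting below a fixed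
point stays below it, and at the given `c` the number `1 / (Δ - 1)` is a fixed point.
-/

open Set

section OrderedSemiring

variable {R : Type*} [Semiring R] [PartialOrder R] [IsOrderedRing R] {c p : R}

theorem monotoneOn_mul_one_add_pow (hc : 0 ≤ c) (d : ℕ) :
    MonotoneOn (fun x ↦ c * (1 + x) ^ d) (Ici 0) := by
  intro x hx y _ hxy
  have hx₁ : 0 ≤ 1 + x := add_nonneg zero_le_one hx
  dsimp only
  gcongr

theorem mapsTo_Icc_mul_one_add_pow {d : ℕ} (hc : 0 ≤ c) (hp : c * (1 + p) ^ d ≤ p) :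
    MapsTo (fun x ↦ c * (1 + x) ^ d) (Icc 0 p) (Icc 0 p) :=
  ((monotoneOn_mul_one_add_pow hc d).mono Icc_subset_Ici_self).mapsTo_Icc.mono_right
    (Icc_subset_Icc (by simpa using hc) hp)

theorem mem_Icc_of_recurrence_mul_one_add_pow {d : ℕ} {a : ℕ → R} (hc : 0 ≤ c) (hp₀ : 0 ≤ p)
    (hp : c * (1 + p) ^ d ≤ p) (ha₀ : a 0 = c) (ha : ∀ i, a (i + 1) = c * (1 + a i) ^ d) (i : ℕ) :
    a i ∈ Icc 0 p := by
  have hmaps := mapsTo_Icc_mul_one_add_pow hc hp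
  induction i with
  | zero => simpa [ha₀] using hmaps (left_mem_Icc.2 hp₀)
  | succ i ih => simpa only [ha] using hmaps ih

end OrderedSemiring

theorem sub_one_pow_div_pow_mul_one_add_one_div_pow {K : Type*} [Field K] {x : K} (hx₀ : x ≠ 0)
    (hx₁ : x ≠ 1) {d : ℕ} (hd : d ≠ 0) :
    (x - 1) ^ (d - 1) / x ^ d * (1 + 1 / (x - 1)) ^ d = 1 / (x - 1) := by
  have hx : x - 1 ≠ 0 := sub_ne_zero.2 hx₁
  calc (x - 1) ^ (d - 1) / x ^ d * (1 + 1 / (x - 1)) ^ d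
      = (x - 1) ^ (d - 1) / x ^ d * (x ^ d / (x - 1) ^ d) := by
        rw [one_add_div hx, sub_add_cancel, div_pow]
    _ = (x - 1) ^ (d - 1) / (x - 1) ^ d := div_mul_div_cancel₀ (pow_ne_zero d hx₀)
    _ = (x - 1) ^ (d - 1) / ((x - 1) ^ (d - 1) * (x - 1)) := by rw [pow_sub_one_mul hd]
    _ = 1 / (x - 1) := by rw [div_mul_cancel_left₀ (pow_ne_zero _ hx), one_div]

theorem tree_recursion_bound_general {K : Type*} [Field K] [LinearOrder K]
    [IsStrictOrderedRing K] {x : K} (hx : 1 < x) {d : ℕ} (hd : d ≠ 0) {c : K}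
    (hc : c = (x - 1) ^ (d - 1) / x ^ d) {a : ℕ → K} (ha₀ : a 0 = c)
    (ha : ∀ i, a (i + 1) = c * (1 + a i) ^ d) (i : ℕ) :
    a i ≤ 1 / (x - 1) := by
  have hx₀ : 0 < x := zero_lt_one.trans hx
  have hx₁ : 0 < x - 1 := sub_pos.2 hx
  have hc₀ : 0 ≤ c := by rw [hc]; positivity
  have hfixed : c * (1 + 1 / (x - 1)) ^ d = 1 / (x - 1) := by
    rw [hc, sub_one_pow_div_pow_mul_one_add_one_div_pow hx₀.ne' hx.ne' hd]
  exact (mem_Icc_of_recurrence_mul_one_add_pow hc₀ (one_div_pos.2 hx₁).le hfixed.le ha₀ ha i).2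

/-- The key numerical estimate in the proof of the tree-counting lemma: with
`c = (Δ−1)^(Δ−1)/Δ^Δ`, the recursion `a 0 = c`, `a (i+1) = c·(1 + a i)^Δ` stays
bounded by `1/(Δ−1)`. -/
theorem tree_recursion_bound (Δ : ℕ) (hΔ : 2 ≤ Δ) (c : ℝ)
    (hc : c = ((Δ : ℝ) - 1) ^ (Δ - 1) / (Δ : ℝ) ^ Δ)
    (a : ℕ → ℝ) (ha0 : a 0 = c) (ha : ∀ i, a (i + 1) = c * (1 + a i) ^ Δ) :
    ∀ i, a i ≤ 1 / ((Δ : ℝ) - 1) :=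
  tree_recursion_bound_general (Nat.one_lt_cast.2 hΔ) (Nat.ne_zero_of_lt hΔ) hc ha0 ha
end

section
/- Let G be a graph with vertex set V, let d denote the graph metric of G and B(x,r) := {y ∈ V : d(x,y) ≤ r} the ball of radius r. Let ε > 0 and let n ≥ 1 be an integer such that |B(x,3n)| < (1+ε)^n for all x ∈ V (in particular these balls are finite). Let g : V → ℕ be a function that attains its maximum at some point y ∈ V, with g(y) > 0. Then there exists an integer r with 3 ≤ r ≤ 3n such that Σ_{x ∈ B(y,r)} g(x) < (1+ε) · Σ_{x ∈ B(y,r−3)} g(x). -/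
/-- Paths of length `n` in an undirected graph with adjacency relation `Adj`. -/
def chain {V : Type*} (Adj : V → V → Prop) : ℕ → V → V → Prop
  | 0, x, y => x = y
  | n+1, x, y => ∃ z, Adj x z ∧ chain Adj n z y

/-- The ball of radius `r` about `x` in the graph metric. -/
def gball {V : Type*} (Adj : V → V → Prop) (x : V) (r : ℕ) : Set V :=
  {y | ∃ m ≤ r, chain Adj m x y}

/-!
If every step from `B(y, 3k)` to `B(y, 3(k + 1))` multiplied the sum of `g` by at least `1 + ε`,
then the sum over `B(y, 3n)` would be at least `(1 + ε) ^ n * g y`. But it is at most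
`|B(y, 3n)| * g y`, which is smaller.
-/

theorem gball_zero {V : Type*} (Adj : V → V → Prop) (x : V) : gball Adj x 0 = {x} := by
  ext z
  simp [gball, chain, eq_comm]

theorem finsum_mem_le_ncard_nsmul {α M : Type*} [AddCommMonoid M] [Preorder M] [AddLeftMono M]
    {s : Set α} (hs : s.Finite) {f : α → M} {b : M} (hf : ∀ x ∈ s, f x ≤ b) :
    ∑ᶠ x ∈ s, f x ≤ s.ncard • b := by
  rw [finsum_mem_eq_finite_toFinset_sum f hs, Set.ncard_eq_toFinset_card s hs]
  exact Finset.sum_le_card_nsmul _ f b fun x hx ↦ hf x (hs.mem_toFinset.mp hx)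

theorem growth_lemma_general {V : Type*} (Adj : V → V → Prop) {c : ℝ} (hc : 0 ≤ c) (s n : ℕ)
    {g : V → ℝ} {y : V} (hfin : (gball Adj y (s * n)).Finite)
    (hcard : ((gball Adj y (s * n)).ncard : ℝ) < c ^ n)
    (hmax : ∀ x ∈ gball Adj y (s * n), g x ≤ g y) (hy : 0 < g y) :
    ∃ r : ℕ, s ≤ r ∧ r ≤ s * n ∧
      ∑ᶠ x ∈ gball Adj y r, g x < c * ∑ᶠ x ∈ gball Adj y (r - s), g x := by
  let S (k : ℕ) : ℝ := ∑ᶠ x ∈ gball Adj y (s * k), g x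
  have S_zero : S 0 = g y := by
    simp only [S, mul_zero, gball_zero, finsum_mem_singleton]
  have S_lt : S n < c ^ n * S 0 :=
    calc
      S n ≤ (gball Adj y (s * n)).ncard • g y := finsum_mem_le_ncard_nsmul hfin hmax
      _ = (gball Adj y (s * n)).ncard * g y := nsmul_eq_mul _ _
      _ < c ^ n * g y := mul_lt_mul_of_pos_right hcard hy
      _ = c ^ n * S 0 := by rw [S_zero]
  obtain ⟨k, hkn, hk⟩ : ∃ k < n, S (k + 1) < c * S k := by
    by_contra! hgrow
    exact S_lt.not_ge (geom_le hc n hgrow)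
  refine ⟨s * (k + 1), Nat.le_mul_of_pos_right s k.succ_pos, Nat.mul_le_mul_left s hkn, ?_⟩
  rwa [Nat.mul_succ, Nat.add_sub_cancel]

/-- Lemma 4.2 of the paper: if all balls of radius `3n` have fewer than `(1+ε)^n` elements and
`g : V → ℕ` attains its (positive) maximum at `y`, then for some `3 ≤ r ≤ 3n` the sum of `g`
over `B(y,r)` is less than `(1+ε)` times the sum of `g` over `B(y,r−3)`. -/
theorem growth_lemma {V : Type*} (Adj : V → V → Prop)
    (hsymm : ∀ x y, Adj x y → Adj y x)
    (ε : ℝ) (hε : 0 < ε) (n : ℕ) (hn : 1 ≤ n)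
    (hball : ∀ x : V, (gball Adj x (3 * n)).Finite ∧
      ((gball Adj x (3 * n)).ncard : ℝ) < (1 + ε) ^ n)
    (g : V → ℕ) (y : V) (hmax : ∀ x, g x ≤ g y) (hy : 0 < g y) :
    ∃ r : ℕ, 3 ≤ r ∧ r ≤ 3 * n ∧
      (∑ᶠ x ∈ gball Adj y r, (g x : ℝ)) <
        (1 + ε) * ∑ᶠ x ∈ gball Adj y (r - 3), (g x : ℝ) :=
  growth_lemma_general Adj (by positivity) 3 n (hball y).1 (hball y).2
    (fun x _ ↦ Nat.cast_le.mpr (hmax x)) (Nat.cast_pos.mpr hy)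
end
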